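/- arXiv:0710.5184 — 5 statements merged into one kernel-verified Lean document; each statement's English description precedes it below -/
import Mathlib

section
/- Main theorem (Theorem 2, transport equations). For every integer ν ≥ 1 and all points x = (r cos φ, r sin φ), ξ = (ρ cos ϕ, ρ sin ϕ) in ℝ² with r > 0, ρ > 0, W(φ) ≠ 0 and W(ϕ) ≠ 0, the functions U_ν satisfy U_0(x, ξ) = 1 and the Hadamard transport equations ⟨x − ξ, ∇_x U_ν(x, ξ)⟩ + ν·U_ν(x, ξ) = −(−Δ_x U_{ν−1}(x, ξ) + V_k(x)·U_{ν−1}(x, ξ)), where ∇_x and Δ_x are the gradient and Laplacian in the variable x. -/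
/-- The Wronskian of a family of `n` real functions: the determinant of the
`n × n` matrix whose `(i, j)`-entry is the `j`-th derivative of the `i`-th function. -/
noncomputable def wronsk {n : ℕ} (f : Fin n → ℝ → ℝ) (t : ℝ) : ℝ :=
  (Matrix.of fun i j : Fin n => iteratedDeriv (j : ℕ) (f i) t).det

/-- The functions `χ_i(φ) = cos(k_i φ + θ_i)`. -/
noncomputable def chiF (m : ℕ) (k : Fin (m + 1) → ℤ) (θ : Fin (m + 1) → ℝ)
    (i : Fin (m + 1)) : ℝ → ℝ :=
  fun φ => Real.cos ((k i : ℝ) * φ + θ i)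

/-- `W(φ) = Wr[χ_0, …, χ_m](φ)`. -/
noncomputable def Wfn (m : ℕ) (k : Fin (m + 1) → ℤ) (θ : Fin (m + 1) → ℝ) : ℝ → ℝ :=
  wronsk (chiF m k θ)

/-- `Ψ_i(φ) = Wr[χ_0, …, χ_{i-1}, χ_{i+1}, …, χ_m](φ) / W(φ)`. -/
noncomputable def PsiF (m : ℕ) (k : Fin (m + 1) → ℤ) (θ : Fin (m + 1) → ℝ)
    (i : Fin (m + 1)) : ℝ → ℝ :=
  fun φ => wronsk (fun j : Fin m => chiF m k θ (i.succAbove j)) φ / Wfn m k θ φ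

/-- `c_i = ∏_{j ≠ i} (k_i² − k_j²)`. -/
noncomputable def cF (m : ℕ) (k : Fin (m + 1) → ℤ) (i : Fin (m + 1)) : ℝ :=
  ∏ j ∈ Finset.univ.erase i, ((k i : ℝ) ^ 2 - (k j : ℝ) ^ 2)

/-- The Hadamard coefficients `U_ν` in polar coordinates:
`U_ν = ((−2)^ν/(rρ)^ν) ∑_i c_i Ψ_i(φ) Ψ_i(ϕ) T_{k_i}^{(ν)}(cos(φ − ϕ))`. -/
noncomputable def Ucoef (m : ℕ) (k : Fin (m + 1) → ℤ) (θ : Fin (m + 1) → ℝ)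
    (ν : ℕ) (r φ ρ ϕ : ℝ) : ℝ :=
  ((-2 : ℝ) ^ ν / (r * ρ) ^ ν) *
    ∑ i, cF m k i * PsiF m k θ i φ * PsiF m k θ i ϕ *
      (Polynomial.derivative^[ν] (Polynomial.Chebyshev.T ℝ (k i))).eval (Real.cos (φ - ϕ))

/-- The potential `V_k` in polar coordinates: `V_k = −(2/r²)·(d²/dφ²) log W(φ)`. -/
noncomputable def Vpot (m : ℕ) (k : Fin (m + 1) → ℤ) (θ : Fin (m + 1) → ℝ)
    (r φ : ℝ) : ℝ :=
  -(2 / r ^ 2) * deriv (deriv fun t => Real.log (Wfn m k θ t)) φ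

/-- First partial derivative in the first variable. -/
noncomputable def pdx (f : ℝ × ℝ → ℝ) (x : ℝ × ℝ) : ℝ := deriv (fun s => f (s, x.2)) x.1

/-- First partial derivative in the second variable. -/
noncomputable def pdy (f : ℝ × ℝ → ℝ) (x : ℝ × ℝ) : ℝ := deriv (fun s => f (x.1, s)) x.2

/-- The Laplacian on `ℝ²`. -/
noncomputable def lap2 (f : ℝ × ℝ → ℝ) (x : ℝ × ℝ) : ℝ := pdx (pdx f) x + pdy (pdy f) x


/-- cofactor expansion along the last column -/
lemma wr_cofactor {m : ℕ} (f : Fin (m + 1) → ℝ → ℝ) (t : ℝ) (v : Fin (m + 1) → ℝ) :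
    ∑ i : Fin (m + 1), (-1 : ℝ) ^ ((i : ℕ) + m) * wronsk (fun j : Fin m => f (i.succAbove j)) t * v i
      = ((Matrix.of fun i j : Fin (m + 1) => iteratedDeriv (j : ℕ) (f i) t).updateCol
          (Fin.last m) v).det := by
  rw [Matrix.det_succ_column _ (Fin.last m)]
  refine Finset.sum_congr rfl fun i _ => ?_
  rw [Matrix.updateCol_self]
  have : ((Matrix.of fun i j : Fin (m + 1) => iteratedDeriv (j : ℕ) (f i) t).updateCol
          (Fin.last m) v).submatrix i.succAbove (Fin.last m).succAbove
      = Matrix.of fun a b : Fin m => iteratedDeriv (b : ℕ) (f (i.succAbove a)) t := by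
    ext a b
    simp [Matrix.submatrix_apply, Fin.succAbove_last, Fin.castSucc_ne_last]
  rw [this]
  simp only [wronsk, Fin.val_last]
  ring

lemma wr_cofactor_lt {m : ℕ} (f : Fin (m + 1) → ℝ → ℝ) (t : ℝ) (j : ℕ) (hj : j < m) :
    ∑ i : Fin (m + 1), (-1 : ℝ) ^ ((i : ℕ) + m) * wronsk (fun j : Fin m => f (i.succAbove j)) t
      * iteratedDeriv j (f i) t = 0 := by
  rw [wr_cofactor f t (fun i => iteratedDeriv j (f i) t)]
  refine Matrix.det_zero_of_column_eq (i := Fin.last m) (j := ⟨j, by omega⟩) ?_ ?_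
  · intro h; have := congrArg Fin.val h; simp at this; omega
  · intro i
    have : (⟨j, by omega⟩ : Fin (m+1)) ≠ Fin.last m := by
      intro h; have := congrArg Fin.val h; simp at this; omega
    simp [this]

lemma wr_cofactor_eq {m : ℕ} (f : Fin (m + 1) → ℝ → ℝ) (t : ℝ) :
    ∑ i : Fin (m + 1), (-1 : ℝ) ^ ((i : ℕ) + m) * wronsk (fun j : Fin m => f (i.succAbove j)) t
      * iteratedDeriv m (f i) t = wronsk f t := by
  rw [wr_cofactor f t (fun i => iteratedDeriv m (f i) t), wronsk]
  congr 1
  ext a b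
  by_cases h : b = Fin.last m
  · subst h; simp
  · simp [h]

lemma wr_hasDerivAt {m : ℕ} (f : Fin (m + 1) → ℝ → ℝ) (hf : ∀ i, ContDiff ℝ (⊤ : ℕ∞) (f i)) (t : ℝ) :
    HasDerivAt (wronsk f) (∑ i : Fin (m + 1), (-1 : ℝ) ^ ((i : ℕ) + m) *
      wronsk (fun j : Fin m => f (i.succAbove j)) t * iteratedDeriv (m + 1) (f i) t) t := by
  have hd : ∀ (j : ℕ) (i : Fin (m+1)), HasDerivAt (iteratedDeriv j (f i)) (iteratedDeriv (j+1) (f i) t) t := by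
    intro j i
    rw [iteratedDeriv_succ]
    exact ((hf i).differentiable_iteratedDeriv j (by exact_mod_cast WithTop.coe_lt_top _) t).hasDerivAt
  let D : ContinuousMultilinearMap ℝ (fun _ : Fin (m+1) => Fin (m+1) → ℝ) ℝ :=
    { toMultilinearMap := (Matrix.detRowAlternating (n := Fin (m+1)) (R := ℝ)).toMultilinearMap
      cont := by
        show Continuous fun M : Fin (m+1) → Fin (m+1) → ℝ => Matrix.det (Matrix.of M)
        exact Continuous.matrix_det continuous_id }
  have hD : ∀ M : Fin (m+1) → Fin (m+1) → ℝ, D M = (Matrix.of M).det := fun M => rfl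
  have hrow : ∀ j : Fin (m+1), HasFDerivAt (fun s => (fun i => iteratedDeriv (j:ℕ) (f i) s : Fin (m+1) → ℝ))
      (ContinuousLinearMap.toSpanSingleton ℝ (fun i => iteratedDeriv ((j:ℕ)+1) (f i) t)) t := by
    intro j
    exact (hasDerivAt_pi.2 fun i => hd j i).hasFDerivAt
  have key := (HasFDerivAt.multilinear_comp (f := D) hrow).hasDerivAt
  have e1 : (fun x => D (fun j : Fin (m+1) => (fun i => iteratedDeriv (j:ℕ) (f i) x : Fin (m+1) → ℝ))) = wronsk f := by
    funext x
    rw [hD, wronsk, ← Matrix.det_transpose]; rfl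
  rw [e1] at key
  refine key.congr_deriv ?_
  symm
  rw [wr_cofactor f t (fun i => iteratedDeriv (m+1) (f i) t)]
  simp only [_root_.sum_apply, ContinuousLinearMap.comp_apply,
    ContinuousMultilinearMap.toContinuousLinearMap_apply, ContinuousLinearMap.toSpanSingleton_apply, one_smul]
  rw [Finset.sum_eq_single (Fin.last m)]
  · rw [hD, ← Matrix.det_transpose]
    congr 1
    ext a b
    by_cases h : a = Fin.last m
    · subst h; simp [Matrix.transpose_apply]
    · simp [Matrix.transpose_apply, h, Function.update_of_ne]
  · intro j _ hj
    rw [hD]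
    have hjm : (j:ℕ) < m := by
      have := j.2
      have h2 : (j:ℕ) ≠ m := fun h => hj (Fin.ext (by simpa using h))
      omega
    have hne : (⟨j+1, by omega⟩ : Fin (m+1)) ≠ j := by
      intro h; have := congrArg Fin.val h; simp at this
    refine Matrix.det_zero_of_row_eq (i := j) (j := ⟨j+1, by omega⟩) hne.symm ?_
    ext i
    simp [hne]
  · simp

lemma wr_contDiff {n : ℕ} (f : Fin n → ℝ → ℝ) (hf : ∀ i, ContDiff ℝ (⊤ : ℕ∞) (f i)) :
    ContDiff ℝ (⊤ : ℕ∞) (wronsk f) := by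
  have hd : ∀ (j : ℕ) (i : Fin n), ContDiff ℝ (⊤ : ℕ∞) (iteratedDeriv j (f i)) := by
    intro j i
    exact ContDiff.iterate_deriv j (hf i) |> fun h => by rwa [← iteratedDeriv_eq_iterate] at h
  have : wronsk f = fun t => (Matrix.of fun i j : Fin n => iteratedDeriv (j : ℕ) (f i) t).det := rfl
  rw [this]
  simp only [Matrix.det_apply, Matrix.of_apply]
  refine ContDiff.sum fun σ _ => ContDiff.const_smul _ (contDiff_prod fun i _ => hd _ _)

lemma contDiffAt_deriv_top {g : ℝ → ℝ} {t : ℝ} (h : ContDiffAt ℝ (⊤ : ℕ∞) g t) :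
    ContDiffAt ℝ (⊤ : ℕ∞) (deriv g) t := by
  have h1 : ContDiffAt ℝ (⊤ : ℕ∞) (fderiv ℝ g) t := h.fderiv_right (by exact_mod_cast le_top)
  exact h1.clm_apply contDiffAt_const

lemma wr_quot_contDiffAt {m : ℕ} (f : Fin (m + 1) → ℝ → ℝ) (hf : ∀ i, ContDiff ℝ (⊤ : ℕ∞) (f i))
    (i : Fin (m + 1)) (t : ℝ) (ht : wronsk f t ≠ 0) :
    ContDiffAt ℝ (⊤ : ℕ∞) (fun s => wronsk (fun j : Fin m => f (i.succAbove j)) s / wronsk f s) t :=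
  ContDiffAt.div (wr_contDiff _ fun _ => hf _).contDiffAt (wr_contDiff _ hf).contDiffAt ht

lemma wr_crum {m : ℕ} (f : Fin (m + 1) → ℝ → ℝ) (hf : ∀ i, ContDiff ℝ (⊤ : ℕ∞) (f i))
    (κ : Fin (m + 1) → ℝ)
    (hκ : ∀ i j t, iteratedDeriv (j + 2) (f i) t = -κ i * iteratedDeriv j (f i) t)
    (t₀ : ℝ) (ht₀ : wronsk f t₀ ≠ 0) (i : Fin (m + 1)) :
    deriv (deriv (fun s => wronsk (fun j : Fin m => f (i.succAbove j)) s / wronsk f s)) t₀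
      = -(κ i + 2 * deriv (deriv fun s => Real.log (wronsk f s)) t₀) *
        (wronsk (fun j : Fin m => f (i.succAbove j)) t₀ / wronsk f t₀) := by
  have hd : ∀ (j : ℕ) (i : Fin (m+1)) (t : ℝ),
      HasDerivAt (iteratedDeriv j (f i)) (iteratedDeriv (j+1) (f i) t) t := by
    intro j i t
    rw [iteratedDeriv_succ]
    exact ((hf i).differentiable_iteratedDeriv j (by exact_mod_cast WithTop.coe_lt_top _) t).hasDerivAt
  have hWc := wr_contDiff f hf
  have hopen : ∀ t, wronsk f t ≠ 0 → ∀ᶠ s in nhds t, wronsk f s ≠ 0 := fun t ht =>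
    hWc.continuous.continuousAt.eventually_ne ht
  set P : Fin (m+1) → ℝ → ℝ := fun i s => wronsk (fun j : Fin m => f (i.succAbove j)) s / wronsk f s
    with hP
  set sg : Fin (m+1) → ℝ := fun i => (-1 : ℝ) ^ ((i : ℕ) + m) with hsg
  set w : ℝ → ℝ := deriv fun s => Real.log (wronsk f s) with hw
  have hPc : ∀ i t, wronsk f t ≠ 0 → ContDiffAt ℝ (⊤ : ℕ∞) (P i) t :=
    fun i t ht => wr_quot_contDiffAt f hf i t ht
  have hPd : ∀ i t, wronsk f t ≠ 0 → HasDerivAt (P i) (deriv (P i) t) t := fun i t ht =>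
    ((hPc i t ht).differentiableAt (by simp)).hasDerivAt
  have hPd2 : ∀ i t, wronsk f t ≠ 0 → HasDerivAt (deriv (P i)) (deriv (deriv (P i)) t) t := by
    intro i t ht
    exact ((contDiffAt_deriv_top (hPc i t ht)).differentiableAt (by simp)).hasDerivAt
  have hwd : HasDerivAt w (deriv w t₀) t₀ :=
    ((contDiffAt_deriv_top (hWc.contDiffAt.log ht₀)).differentiableAt (by simp)).hasDerivAt
  have hw1 : ∀ t, wronsk f t ≠ 0 → w t = deriv (wronsk f) t / wronsk f t := by
    intro t ht
    rw [hw]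
    exact deriv.log (hWc.differentiable (by simp) t) ht
  let E : ℕ → ℝ → ℝ := fun j t => ∑ i, sg i * P i t * iteratedDeriv j (f i) t
  let E1 : ℕ → ℝ → ℝ := fun j t => ∑ i, sg i * deriv (P i) t * iteratedDeriv j (f i) t
  let E2 : ℕ → ℝ → ℝ := fun j t => ∑ i, sg i * deriv (deriv (P i)) t * iteratedDeriv j (f i) t
  have hEd : ∀ j t, wronsk f t ≠ 0 → HasDerivAt (E j) (E1 j t + E (j+1) t) t := by
    intro j t ht
    have := HasDerivAt.fun_sum (u := Finset.univ) fun i _ =>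
      (((hPd i t ht).const_mul (sg i)).mul (hd j i t))
    rw [Finset.sum_add_distrib] at this
    exact this
  have hE1d : ∀ j t, wronsk f t ≠ 0 → HasDerivAt (E1 j) (E2 j t + E1 (j+1) t) t := by
    intro j t ht
    have := HasDerivAt.fun_sum (u := Finset.univ) fun i _ =>
      (((hPd2 i t ht).const_mul (sg i)).mul (hd j i t))
    rw [Finset.sum_add_distrib] at this
    exact this
  have hEW : ∀ j t, E j t = (∑ i, sg i * wronsk (fun j : Fin m => f (i.succAbove j)) t
      * iteratedDeriv j (f i) t) / wronsk f t := by
    intro j t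
    simp only [E, hP, Finset.sum_div]
    refine Finset.sum_congr rfl fun i _ => ?_
    ring
  have hElt : ∀ j t, j < m → E j t = 0 := by
    intro j t hj
    rw [hEW, wr_cofactor_lt f t j hj, zero_div]
  have hEm : ∀ t, wronsk f t ≠ 0 → E m t = 1 := by
    intro t ht
    rw [hEW, wr_cofactor_eq f t, div_self ht]
  have hEm1 : ∀ t, wronsk f t ≠ 0 → E (m+1) t = w t := by
    intro t ht
    rw [hEW, hw1 t ht, (wr_hasDerivAt f hf t).deriv]
  have hcmp : ∀ (F G : ℝ → ℝ) (F' G' t : ℝ), wronsk f t ≠ 0 →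
      (∀ s, wronsk f s ≠ 0 → F s = G s) → HasDerivAt F F' t → HasDerivAt G G' t → F' = G' := by
    intro F G F' G' t ht h hF hG
    have : F =ᶠ[nhds t] G := (hopen t ht).mono fun s hs => h s hs
    exact (hF.congr_of_eventuallyEq this.symm).unique hG
  have hE1lt : ∀ j t, wronsk f t ≠ 0 → j < m → E1 j t = - E (j+1) t := by
    intro j t ht hj
    have := hcmp (E j) (fun _ => 0) _ _ t ht (fun s _ => hElt j s hj) (hEd j t ht) (hasDerivAt_const t 0)
    linarith
  have hE1m : ∀ t, wronsk f t ≠ 0 → E1 m t = - w t := by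
    intro t ht
    have := hcmp (E m) (fun _ => 1) _ _ t ht (fun s hs => hEm s hs) (hEd m t ht) (hasDerivAt_const t 1)
    have := hEm1 t ht
    linarith
  have hE1m1 : E1 (m+1) t₀ = deriv w t₀ - E (m+2) t₀ := by
    have := hcmp (E (m+1)) w _ _ t₀ ht₀ hEm1 (hEd (m+1) t₀ ht₀) hwd
    linarith
  have hE2lt : ∀ j, j + 1 < m → E2 j t₀ = E (j+2) t₀ := by
    intro j hj
    have := hcmp (E1 j) (fun _ => 0) _ _ t₀ ht₀ (fun s hs => by
      rw [hE1lt j s hs (by omega), hElt _ s hj, neg_zero]) (hE1d j t₀ ht₀) (hasDerivAt_const t₀ 0)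
    rw [hE1lt (j+1) t₀ ht₀ hj] at this
    linarith
  have hE2m1 : ∀ j, j + 1 = m → E2 j t₀ = E (j+2) t₀ := by
    intro j hj
    have := hcmp (E1 j) (fun _ => -1) _ _ t₀ ht₀ (fun s hs => by
      rw [hE1lt j s hs (by omega), hj, hEm s hs]) (hE1d j t₀ ht₀) (hasDerivAt_const t₀ (-1))
    have h2 : E (j+2) t₀ = w t₀ := by
      rw [← hEm1 t₀ ht₀, ← hj]
    rw [hj, hE1m t₀ ht₀] at this
    linarith
  have hE2m : E2 m t₀ = E (m+2) t₀ - 2 * deriv w t₀ := by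
    have := hcmp (E1 m) (fun s => - w s) _ _ t₀ ht₀ (fun s hs => hE1m s hs) (hE1d m t₀ ht₀) hwd.neg
    linarith
  have hfin : ∀ j, j ≤ m → E2 j t₀ = E (j+2) t₀ - 2 * deriv w t₀ * E j t₀ := by
    intro j hj
    rcases Nat.lt_or_ge (j+1) m with h | h
    · rw [hE2lt j h, hElt j t₀ (by omega)]; ring
    · rcases Nat.lt_or_ge j m with h' | h'
      · rw [hE2m1 j (by omega), hElt j t₀ h']; ring
      · obtain rfl : j = m := by omega
        rw [hE2m, hEm t₀ ht₀]; ring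
  have hvec : (fun i => sg i * (deriv (deriv (P i)) t₀ + (κ i + 2 * deriv w t₀) * P i t₀)) = 0 := by
    refine Matrix.eq_zero_of_vecMul_eq_zero (M := Matrix.of fun i j : Fin (m+1) => iteratedDeriv (j : ℕ) (f i) t₀) ht₀ ?_
    funext j
    have h := hfin j (by omega)
    simp only [E, E2, hκ, Finset.mul_sum] at h
    rw [← sub_eq_zero, ← Finset.sum_sub_distrib, ← Finset.sum_sub_distrib] at h
    simp only [Matrix.vecMul, dotProduct, Matrix.of_apply, Pi.zero_apply]
    rw [← h]
    refine Finset.sum_congr rfl fun i _ => ?_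
    ring
  have := congrFun hvec i
  simp only [Pi.zero_apply, mul_eq_zero] at this
  rcases this with h | h
  · exact absurd h (by simp [hsg])
  · linarith

lemma mom_sum {m : ℕ} (x : Fin (m + 1) → ℝ) (hx : Function.Injective x) (R : Polynomial ℝ)
    (hR : R.natDegree ≤ m) :
    R.coeff m = ∑ i, R.eval (x i) / ∏ j ∈ Finset.univ.erase i, (x i - x j) := by
  have h1 : R.degree < (Finset.univ : Finset (Fin (m+1))).card := by
    rw [Finset.card_univ, Fintype.card_fin]
    refine lt_of_le_of_lt (Polynomial.degree_le_natDegree) ?_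
    exact_mod_cast (by omega : R.natDegree < m + 1)
  have h2 := Lagrange.coeff_eq_sum hx.injOn h1
  rwa [Finset.card_univ, Fintype.card_fin, Nat.add_sub_cancel] at h2

lemma mom_poly {m : ℕ} (x u : Fin (m + 1) → ℝ) (hx : Function.Injective x) (s : ℕ) (hs : s ≤ m)
    (hmom : ∀ a < s, ∑ i, u i * x i ^ a = 0) :
    ∃ P : Polynomial ℝ, P.natDegree ≤ m - s ∧
      (∀ i, P.eval (x i) = (∏ j ∈ Finset.univ.erase i, (x i - x j)) * u i) ∧
      P.coeff (m - s) = ∑ i, u i * x i ^ s := by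
  have hinj : Set.InjOn x (Finset.univ : Finset (Fin (m+1))) := hx.injOn
  have hc : ∀ i, (∏ j ∈ Finset.univ.erase i, (x i - x j)) ≠ 0 := by
    intro i
    refine Finset.prod_ne_zero_iff.2 fun j hj => sub_ne_zero.2 fun h => ?_
    exact (Finset.ne_of_mem_erase hj) (hx h).symm
  set P := Lagrange.interpolate Finset.univ x
    (fun i => (∏ j ∈ Finset.univ.erase i, (x i - x j)) * u i) with hP
  have hev : ∀ i, P.eval (x i) = (∏ j ∈ Finset.univ.erase i, (x i - x j)) * u i := fun i =>
    Lagrange.eval_interpolate_at_node _ hinj (Finset.mem_univ i)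
  have hdeg : P.natDegree ≤ m := by
    have := Lagrange.degree_interpolate_lt (fun i => (∏ j ∈ Finset.univ.erase i, (x i - x j)) * u i) hinj
    rw [← hP] at this
    simp only [Finset.card_univ, Fintype.card_fin] at this
    rw [Polynomial.natDegree_le_iff_coeff_eq_zero]
    exact fun N hN => (Polynomial.degree_lt_iff_coeff_zero _ _).1 this N hN
  have hco : ∀ a d, d + a = m → P.natDegree ≤ d → P.coeff d = ∑ i, u i * x i ^ a := by
    intro a d hd hPd
    have h2 := mom_sum x hx (Polynomial.X ^ a * P) (by
      have : (Polynomial.X ^ a * P).natDegree ≤ a + d :=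
        Polynomial.natDegree_mul_le_of_le (Polynomial.natDegree_X_pow_le a) hPd
      omega)
    have h3 : (Polynomial.X ^ a * P).coeff m = P.coeff d := by
      rw [← hd, Polynomial.coeff_X_pow_mul]
    rw [h3] at h2
    rw [h2]
    refine Finset.sum_congr rfl fun i _ => ?_
    rw [Polynomial.eval_mul, Polynomial.eval_pow, Polynomial.eval_X, hev, div_eq_iff (hc i)]
    ring
  have hdeg2 : P.natDegree ≤ m - s := by
    by_contra hcon
    have h := hco (m - P.natDegree) P.natDegree (by omega) le_rfl
    rw [hmom _ (by omega)] at h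
    have : P = 0 := Polynomial.leadingCoeff_eq_zero.1 h
    rw [this] at hcon
    simp at hcon
  exact ⟨P, hdeg2, hev, hco s (m - s) (by omega) hdeg2⟩

lemma mom_pair {m : ℕ} (x u v : Fin (m + 1) → ℝ) (hx : Function.Injective x) (s s' : ℕ)
    (hs : s + s' = m)
    (hu : ∀ a < s, ∑ i, u i * x i ^ a = 0) (hv : ∀ a < s', ∑ i, v i * x i ^ a = 0) :
    ∑ i, (∏ j ∈ Finset.univ.erase i, (x i - x j)) * u i * v i
      = (∑ i, u i * x i ^ s) * (∑ i, v i * x i ^ s') := by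
  have hc : ∀ i, (∏ j ∈ Finset.univ.erase i, (x i - x j)) ≠ 0 := by
    intro i
    refine Finset.prod_ne_zero_iff.2 fun j hj => sub_ne_zero.2 fun h => ?_
    exact (Finset.ne_of_mem_erase hj) (hx h).symm
  obtain ⟨P, hP1, hP2, hP3⟩ := mom_poly x u hx s (by omega) hu
  obtain ⟨Q, hQ1, hQ2, hQ3⟩ := mom_poly x v hx s' (by omega) hv
  have h := mom_sum x hx (P * Q) (by
    have := Polynomial.natDegree_mul_le_of_le hP1 hQ1
    omega)
  rw [← hP3, ← hQ3, ← Polynomial.coeff_mul_add_eq_of_natDegree_le hP1 hQ1, show m - s + (m - s') = m by omega, h]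
  refine Finset.sum_congr rfl fun i _ => ?_
  rw [Polynomial.eval_mul, hP2, hQ2, eq_div_iff (hc i)]
  ring

lemma mom_pair' {m : ℕ} (x u v : Fin (m + 1) → ℝ) (hx : Function.Injective x) (s s' : ℕ)
    (hs : s + s' + 1 = m) (hx0 : x 0 = 0) (hu0 : u 0 = 0) (hv0 : v 0 = 0)
    (hu : ∀ a < s, ∑ i, u i * x i ^ a = 0) (hv : ∀ a < s', ∑ i, v i * x i ^ a = 0) :
    ∑ i, (∏ j ∈ Finset.univ.erase i, (x i - x j)) * u i * v i / x i
      = (∑ i, u i * x i ^ s) * (∑ i, v i * x i ^ s') := by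
  have hc : ∀ i, (∏ j ∈ Finset.univ.erase i, (x i - x j)) ≠ 0 := by
    intro i
    refine Finset.prod_ne_zero_iff.2 fun j hj => sub_ne_zero.2 fun h => ?_
    exact (Finset.ne_of_mem_erase hj) (hx h).symm
  obtain ⟨P, hP1, hP2, hP3⟩ := mom_poly x u hx s (by omega) hu
  obtain ⟨Q, hQ1, hQ2, hQ3⟩ := mom_poly x v hx s' (by omega) hv
  have hPX : P.divX * Polynomial.X = P := by
    have h0 : P.coeff 0 = 0 := by
      have h := hP2 0
      rw [hx0, hu0, mul_zero] at h
      rw [Polynomial.coeff_zero_eq_eval_zero, h]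
    have := Polynomial.divX_mul_X_add P
    rwa [h0, Polynomial.C_0, add_zero] at this
  have hdX : P.divX.natDegree ≤ m - s - 1 := by
    rw [Polynomial.natDegree_divX_eq_natDegree_tsub_one]; omega
  have hcX : P.divX.coeff (m - s - 1) = P.coeff (m - s) := by
    rw [Polynomial.coeff_divX]; congr 1; omega
  have h := mom_sum x hx (P.divX * Q) (by
    have := Polynomial.natDegree_mul_le_of_le hdX hQ1
    omega)
  rw [← hP3, ← hQ3, ← hcX, ← Polynomial.coeff_mul_add_eq_of_natDegree_le hdX hQ1, show m - s - 1 + (m - s') = m by omega, h]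
  refine Finset.sum_congr rfl fun i _ => ?_
  by_cases hi : i = 0
  · subst hi
    rw [Polynomial.eval_mul, hQ2, hv0]; simp
  have hxi : x i ≠ 0 := fun h => hi (hx (h.trans hx0.symm))
  have e1 : P.divX.eval (x i) * x i = (∏ j ∈ Finset.univ.erase i, (x i - x j)) * u i := by
    rw [← hP2]; conv_rhs => rw [← hPX]
    simp
  rw [Polynomial.eval_mul, hQ2, div_eq_div_iff hxi (hc i)]
  linear_combination (-(∏ j ∈ Finset.univ.erase i, (x i - x j)) * v i) * e1

lemma chiF_contDiff (m : ℕ) (k : Fin (m + 1) → ℤ) (θ : Fin (m + 1) → ℝ) (i : Fin (m + 1)) :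
    ContDiff ℝ (⊤ : ℕ∞) (chiF m k θ i) := by
  unfold chiF
  fun_prop

lemma chiF_deriv (m : ℕ) (k : Fin (m + 1) → ℤ) (θ : Fin (m + 1) → ℝ) (i : Fin (m + 1)) :
    deriv (chiF m k θ i) = fun t => -(k i : ℝ) * Real.sin ((k i : ℝ) * t + θ i) := by
  funext t
  have h : HasDerivAt (fun t : ℝ => (k i : ℝ) * t + θ i) (k i : ℝ) t := by
    simpa using ((hasDerivAt_id t).const_mul (k i : ℝ)).add_const (θ i)
  have := h.cos.deriv
  unfold chiF
  rw [this]; ring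

lemma chiF_deriv2 (m : ℕ) (k : Fin (m + 1) → ℤ) (θ : Fin (m + 1) → ℝ) (i : Fin (m + 1)) :
    deriv (deriv (chiF m k θ i)) = fun t => -(k i : ℝ) ^ 2 * chiF m k θ i t := by
  rw [chiF_deriv]
  funext t
  have h : HasDerivAt (fun t : ℝ => (k i : ℝ) * t + θ i) (k i : ℝ) t := by
    simpa using ((hasDerivAt_id t).const_mul (k i : ℝ)).add_const (θ i)
  have := (h.sin.const_mul (-(k i : ℝ))).deriv
  rw [this]; unfold chiF; ring

lemma chiF_rec (m : ℕ) (k : Fin (m + 1) → ℤ) (θ : Fin (m + 1) → ℝ) (i : Fin (m + 1)) (j : ℕ) (t : ℝ) :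
    iteratedDeriv (j + 2) (chiF m k θ i) t = -(k i : ℝ) ^ 2 * iteratedDeriv j (chiF m k θ i) t := by
  rw [iteratedDeriv_succ', iteratedDeriv_succ', chiF_deriv2, iteratedDeriv_const_mul_field]

lemma chiF_even (m : ℕ) (k : Fin (m + 1) → ℤ) (θ : Fin (m + 1) → ℝ) (i : Fin (m + 1)) (a b : ℕ) (t : ℝ) :
    iteratedDeriv (2 * a + b) (chiF m k θ i) t
      = (-1) ^ a * (((k i : ℝ) ^ 2) ^ a * iteratedDeriv b (chiF m k θ i) t) := by
  induction a with
  | zero => simp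
  | succ a ih =>
    rw [show 2 * (a + 1) + b = (2 * a + b) + 2 by ring, chiF_rec, ih]; ring

/-- sign-corrected moments -/
lemma psi_mom (m : ℕ) (k : Fin (m + 1) → ℤ) (θ : Fin (m + 1) → ℝ) (t : ℝ) (ht : Wfn m k θ t ≠ 0)
    (a b : ℕ) (h : 2 * a + b ≤ m) :
    ∑ i : Fin (m+1), (-1 : ℝ) ^ ((i : ℕ) + m) * PsiF m k θ i t * iteratedDeriv b (chiF m k θ i) t * ((k i : ℝ) ^ 2) ^ a
      = if 2 * a + b = m then (-1) ^ a else 0 := by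
  have e : ∑ i : Fin (m+1), (-1 : ℝ) ^ ((i : ℕ) + m) * PsiF m k θ i t * iteratedDeriv b (chiF m k θ i) t * ((k i : ℝ) ^ 2) ^ a
      = (-1) ^ a * (∑ i : Fin (m+1), (-1 : ℝ) ^ ((i : ℕ) + m) *
        wronsk (fun j : Fin m => chiF m k θ (i.succAbove j)) t
        * iteratedDeriv (2 * a + b) (chiF m k θ i) t) / Wfn m k θ t := by
    rw [Finset.mul_sum, Finset.sum_div]
    refine Finset.sum_congr rfl fun i _ => ?_
    rw [chiF_even, PsiF]
    have : ((-1 : ℝ) ^ a) * (-1) ^ a = 1 := by rw [← mul_pow]; simp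
    linear_combination (-(-1 : ℝ) ^ ((i : ℕ) + m) * (wronsk (fun j : Fin m => chiF m k θ (i.succAbove j)) t /
      Wfn m k θ t) * iteratedDeriv b (chiF m k θ i) t * ((k i : ℝ) ^ 2) ^ a) * this
  rw [e]
  split_ifs with h2
  · rw [h2, wr_cofactor_eq]
    rw [Wfn] at ht ⊢
    field_simp
  · rw [wr_cofactor_lt _ _ _ (by omega)]; simp

lemma U_zero (m : ℕ) (hm : 1 ≤ m) (k : Fin (m + 1) → ℤ) (hk0 : k 0 = 0) (hk : StrictMono k)
    (θ : Fin (m + 1) → ℝ) (hθ0 : θ 0 = 0) (s t : ℝ) (hs : Wfn m k θ s ≠ 0) (ht : Wfn m k θ t ≠ 0) :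
    ∑ i, cF m k i * PsiF m k θ i s * PsiF m k θ i t * Real.cos ((k i : ℝ) * (s - t)) = 1 := by
  set x : Fin (m+1) → ℝ := fun i => (k i : ℝ) ^ 2 with hxdef
  have hknn : ∀ i, 0 ≤ k i := fun i => hk0 ▸ hk.monotone (Fin.zero_le i)
  have hx : Function.Injective x := by
    intro i j hij
    have h1 : (0:ℝ) ≤ k i := by exact_mod_cast hknn i
    have h2 : (0:ℝ) ≤ k j := by exact_mod_cast hknn j
    have : (k i : ℝ) = k j := (sq_eq_sq₀ h1 h2).1 hij
    exact hk.injective (by exact_mod_cast this)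
  have hx0 : x 0 = 0 := by simp [hxdef, hk0]
  let u : ℝ → Fin (m+1) → ℝ := fun t i => (-1 : ℝ) ^ ((i : ℕ) + m) * PsiF m k θ i t * iteratedDeriv 0 (chiF m k θ i) t
  let v : ℝ → Fin (m+1) → ℝ := fun t i => (-1 : ℝ) ^ ((i : ℕ) + m) * PsiF m k θ i t * iteratedDeriv 1 (chiF m k θ i) t
  have hv0 : ∀ t, v t 0 = 0 := by
    intro t
    simp only [v, iteratedDeriv_one, chiF_deriv, hk0]; simp
  have hsplit : ∑ i, cF m k i * PsiF m k θ i s * PsiF m k θ i t * Real.cos ((k i : ℝ) * (s - t))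
      = ∑ i, (∏ j ∈ Finset.univ.erase i, (x i - x j)) * u s i * u t i
        + ∑ i, (∏ j ∈ Finset.univ.erase i, (x i - x j)) * v s i * v t i / x i := by
    rw [← Finset.sum_add_distrib]
    refine Finset.sum_congr rfl fun i _ => ?_
    have hsg : ((-1 : ℝ) ^ ((i : ℕ) + m)) * (-1) ^ ((i : ℕ) + m) = 1 := by rw [← mul_pow]; simp
    by_cases hi : i = 0
    · subst hi
      rw [hv0]
      simp only [u, iteratedDeriv_zero, chiF, hk0, hθ0, cF, hxdef]
      simp only [Int.cast_zero, zero_mul, add_zero, Real.cos_zero, mul_one, mul_zero, zero_div]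
      linear_combination (-(∏ j ∈ Finset.univ.erase (0 : Fin (m+1)), (((0:ℝ)) ^ 2 - (k j : ℝ) ^ 2))
        * PsiF m k θ 0 s * PsiF m k θ 0 t) * hsg
    · have hki : (k i : ℝ) ≠ 0 := by
        intro h
        exact hi (hx (by simp [hxdef, h, hk0]))
      have hcos : Real.cos ((k i : ℝ) * (s - t))
          = chiF m k θ i s * chiF m k θ i t + deriv (chiF m k θ i) s * deriv (chiF m k θ i) t / x i := by
        rw [chiF_deriv]
        simp only [chiF, hxdef]
        rw [show (k i : ℝ) * (s - t) = ((k i : ℝ) * s + θ i) - ((k i : ℝ) * t + θ i) by ring, Real.cos_sub]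
        field_simp
      rw [hcos]
      simp only [u, v, iteratedDeriv_zero, iteratedDeriv_one, cF]
      change (∏ j ∈ Finset.univ.erase i, (x i - x j)) * _ * _ * _ = _
      linear_combination (-(∏ j ∈ Finset.univ.erase i, (x i - x j)) * PsiF m k θ i s * PsiF m k θ i t *
        (chiF m k θ i s * chiF m k θ i t + deriv (chiF m k θ i) s * deriv (chiF m k θ i) t / x i)) * hsg
  rw [hsplit]
  have hum : ∀ t, Wfn m k θ t ≠ 0 → ∀ a, 2 * a ≤ m → ∑ i, u t i * x i ^ a = if 2 * a = m then (-1) ^ a else 0 :=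
    fun t ht a ha => psi_mom m k θ t ht a 0 ha
  have hvm : ∀ t, Wfn m k θ t ≠ 0 → ∀ a, 2 * a + 1 ≤ m → ∑ i, v t i * x i ^ a = if 2 * a + 1 = m then (-1) ^ a else 0 :=
    fun t ht a ha => psi_mom m k θ t ht a 1 ha
  have hu' : ∀ t, Wfn m k θ t ≠ 0 → ∀ a, 2 * a < m → ∑ i, u t i * x i ^ a = 0 := fun t ht a ha => by
    rw [hum t ht a ha.le, if_neg ha.ne]
  have hv' : ∀ t, Wfn m k θ t ≠ 0 → ∀ a, 2 * a + 1 < m → ∑ i, v t i * x i ^ a = 0 := fun t ht a ha => by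
    rw [hvm t ht a ha.le, if_neg ha.ne]
  have hsq : ∀ a : ℕ, ((-1 : ℝ) ^ a) * (-1) ^ a = 1 := fun a => by rw [← mul_pow]; simp
  rcases Nat.even_or_odd' m with ⟨n, hn | hn⟩
  · rw [mom_pair x (u s) (u t) hx n n (by omega) (fun a ha => hu' s hs a (by omega)) (fun a ha => hu' t ht a (by omega)),
      mom_pair' x (v s) (v t) hx n (n - 1) (by omega) hx0 (hv0 s) (hv0 t) (fun a ha => hv' s hs a (by omega))
        (fun a ha => hv' t ht a (by omega)),
      hv' t ht (n - 1) (by omega), hum s hs n (by omega), hum t ht n (by omega), if_pos hn.symm, hsq]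
    simp
  · rw [mom_pair x (u s) (u t) hx n (n + 1) (by omega) (fun a ha => hu' s hs a (by omega)) (fun a ha => hu' t ht a (by omega)),
      mom_pair' x (v s) (v t) hx n n (by omega) hx0 (hv0 s) (hv0 t) (fun a ha => hv' s hs a (by omega))
        (fun a ha => hv' t ht a (by omega)),
      hu' s hs n (by omega), hvm s hs n (by omega), hvm t ht n (by omega), if_pos hn.symm, hsq]
    simp

lemma polar_curve (Ω : Set ℝ) (hΩ : IsOpen Ω) (g : ℝ → ℝ) (n : ℕ) (f : ℝ × ℝ → ℝ)
    (hf : ∀ r t, 0 < r → t ∈ Ω → f (r * Real.cos t, r * Real.sin t) = g t / r ^ n)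
    (r φ g' : ℝ) (hr : 0 < r) (hφ : φ ∈ Ω) (hg : HasDerivAt g g' φ)
    (α β : ℝ → ℝ) (s₀ α' β' : ℝ) (hα : HasDerivAt α α' s₀) (hβ : HasDerivAt β β' s₀)
    (hα0 : α s₀ = r * Real.cos φ) (hβ0 : β s₀ = r * Real.sin φ) :
    HasDerivAt (fun s => f (α s, β s))
      ((g' * (β' * Real.cos φ - α' * Real.sin φ)
        - n * g φ * (α' * Real.cos φ + β' * Real.sin φ)) / r ^ (n + 1)) s₀ := by
  have hcs := Real.sin_sq_add_cos_sq φ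
  let D : ℝ → ℝ := fun s => α s * Real.cos φ + β s * Real.sin φ
  let N : ℝ → ℝ := fun s => β s * Real.cos φ - α s * Real.sin φ
  let ang : ℝ → ℝ := fun s => φ + Real.arctan (N s / D s)
  let rad : ℝ → ℝ := fun s => Real.sqrt (α s ^ 2 + β s ^ 2)
  have hD0 : D s₀ = r := by
    simp only [D, hα0, hβ0]; linear_combination r * hcs
  have hN0 : N s₀ = 0 := by
    simp only [N, hα0, hβ0]; ring
  have hDd : HasDerivAt D (α' * Real.cos φ + β' * Real.sin φ) s₀ :=
    (hα.mul_const _).add (hβ.mul_const _)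
  have hNd : HasDerivAt N (β' * Real.cos φ - α' * Real.sin φ) s₀ :=
    (hβ.mul_const _).sub (hα.mul_const _)
  have hang0 : ang s₀ = φ := by simp [ang, hN0]
  have hangd : HasDerivAt ang ((β' * Real.cos φ - α' * Real.sin φ) / r) s₀ := by
    have h := ((hNd.div hDd (by rw [hD0]; exact hr.ne')).arctan).const_add φ
    refine h.congr_deriv ?_
    simp only [Pi.div_apply, hN0, hD0]
    field_simp
    ring
  have hq0 : α s₀ ^ 2 + β s₀ ^ 2 = r ^ 2 := by
    rw [hα0, hβ0]; linear_combination r ^ 2 * hcs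
  have hrad0 : rad s₀ = r := by
    simp only [rad, hq0]; exact Real.sqrt_sq hr.le
  have hradd : HasDerivAt rad (α' * Real.cos φ + β' * Real.sin φ) s₀ := by
    have h := ((hα.pow 2).add (hβ.pow 2)).sqrt (by
      simp only [Pi.add_apply, Pi.pow_apply]; rw [hq0]; positivity)
    refine h.congr_deriv ?_
    simp only [Pi.add_apply, Pi.pow_apply]
    rw [hq0, Real.sqrt_sq hr.le, hα0, hβ0]
    field_simp
    ring
  have hDpos : ∀ᶠ s in nhds s₀, 0 < D s :=
    hDd.continuousAt.eventually (lt_mem_nhds (by rw [hD0]; exact hr))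
  have hangΩ : ∀ᶠ s in nhds s₀, ang s ∈ Ω :=
    hangd.continuousAt.eventually (hΩ.mem_nhds (by rw [hang0]; exact hφ))
  have heq : (fun s => f (α s, β s)) =ᶠ[nhds s₀] fun s => g (ang s) / rad s ^ n := by
    filter_upwards [hDpos, hangΩ] with s hs hs'
    have hqe : α s ^ 2 + β s ^ 2 = D s ^ 2 + N s ^ 2 := by
      simp only [D, N]; linear_combination (-(α s ^ 2 + β s ^ 2)) * hcs
    have hradp : 0 < rad s := Real.sqrt_pos.2 (by rw [hqe]; positivity)
    have hsq : Real.sqrt (1 + (N s / D s) ^ 2) = rad s / D s := by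
      simp only [rad]
      rw [show 1 + (N s / D s) ^ 2 = (α s ^ 2 + β s ^ 2) / D s ^ 2 by rw [hqe]; field_simp,
        Real.sqrt_div' _ (by positivity), Real.sqrt_sq hs.le]
    have hca : Real.cos (Real.arctan (N s / D s)) = D s / rad s := by
      rw [Real.cos_arctan, hsq]; field_simp
    have hsa : Real.sin (Real.arctan (N s / D s)) = N s / rad s := by
      rw [Real.sin_arctan, hsq]; field_simp
    rw [← hf (rad s) (ang s) hradp hs']
    congr 1
    refine Prod.ext ?_ ?_
    · simp only [ang, Real.cos_add, hca, hsa]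
      field_simp
      simp only [D, N]; linear_combination (-α s) * hcs
    · simp only [ang, Real.sin_add, hca, hsa]
      field_simp
      simp only [D, N]; linear_combination (-β s) * hcs
  refine HasDerivAt.congr_of_eventuallyEq ?_ heq
  have hgc : HasDerivAt (fun s => g (ang s)) (g' * ((β' * Real.cos φ - α' * Real.sin φ) / r)) s₀ := by
    have : HasDerivAt g g' (ang s₀) := by rw [hang0]; exact hg
    exact this.comp s₀ hangd
  have h := hgc.div (hradd.pow n) (by simp only [Pi.pow_apply]; rw [hrad0]; positivity)
  refine h.congr_deriv ?_
  simp only [Pi.pow_apply, hrad0, hang0]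
  cases n with
  | zero => simp; field_simp
  | succ n =>
    simp only [Nat.add_sub_cancel]
    field_simp
    push_cast
    ring

lemma polar_pdx (Ω : Set ℝ) (hΩ : IsOpen Ω) (g : ℝ → ℝ) (n : ℕ) (f : ℝ × ℝ → ℝ)
    (hf : ∀ r t, 0 < r → t ∈ Ω → f (r * Real.cos t, r * Real.sin t) = g t / r ^ n)
    (hg : ∀ t ∈ Ω, DifferentiableAt ℝ g t)
    (r φ : ℝ) (hr : 0 < r) (hφ : φ ∈ Ω) :
    pdx f (r * Real.cos φ, r * Real.sin φ)
      = (-(deriv g φ) * Real.sin φ - n * g φ * Real.cos φ) / r ^ (n + 1) := by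
  have := (polar_curve Ω hΩ g n f hf r φ _ hr hφ (hg φ hφ).hasDerivAt (fun s => s)
    (fun _ => r * Real.sin φ) (r * Real.cos φ) 1 0 (hasDerivAt_id _) (hasDerivAt_const _ _) rfl rfl).deriv
  rw [pdx, this]
  ring

lemma polar_pdy (Ω : Set ℝ) (hΩ : IsOpen Ω) (g : ℝ → ℝ) (n : ℕ) (f : ℝ × ℝ → ℝ)
    (hf : ∀ r t, 0 < r → t ∈ Ω → f (r * Real.cos t, r * Real.sin t) = g t / r ^ n)
    (hg : ∀ t ∈ Ω, DifferentiableAt ℝ g t)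
    (r φ : ℝ) (hr : 0 < r) (hφ : φ ∈ Ω) :
    pdy f (r * Real.cos φ, r * Real.sin φ)
      = (deriv g φ * Real.cos φ - n * g φ * Real.sin φ) / r ^ (n + 1) := by
  have := (polar_curve Ω hΩ g n f hf r φ _ hr hφ (hg φ hφ).hasDerivAt (fun _ => r * Real.cos φ)
    (fun s => s) (r * Real.sin φ) 0 1 (hasDerivAt_const _ _) (hasDerivAt_id _) rfl rfl).deriv
  rw [pdy, this]
  ring

lemma polar_lap (Ω : Set ℝ) (hΩ : IsOpen Ω) (g : ℝ → ℝ) (n : ℕ) (f : ℝ × ℝ → ℝ)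
    (hf : ∀ r t, 0 < r → t ∈ Ω → f (r * Real.cos t, r * Real.sin t) = g t / r ^ n)
    (hg : ∀ t ∈ Ω, DifferentiableAt ℝ g t) (hg2 : ∀ t ∈ Ω, DifferentiableAt ℝ (deriv g) t)
    (r φ : ℝ) (hr : 0 < r) (hφ : φ ∈ Ω) :
    lap2 f (r * Real.cos φ, r * Real.sin φ)
      = (n ^ 2 * g φ + deriv (deriv g) φ) / r ^ (n + 2) := by
  have hcs := Real.sin_sq_add_cos_sq φ
  have hX : ∀ t ∈ Ω, HasDerivAt (fun t => -(deriv g t) * Real.sin t - n * g t * Real.cos t)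
      (-(deriv (deriv g) t) * Real.sin t + -(deriv g t) * Real.cos t
        - (n * deriv g t * Real.cos t + n * g t * (-Real.sin t))) t := fun t ht =>
    ((hg2 t ht).hasDerivAt.neg.mul (Real.hasDerivAt_sin t)).sub
      (((hg t ht).hasDerivAt.const_mul _).mul (Real.hasDerivAt_cos t))
  have hY : ∀ t ∈ Ω, HasDerivAt (fun t => deriv g t * Real.cos t - n * g t * Real.sin t)
      (deriv (deriv g) t * Real.cos t + deriv g t * (-Real.sin t)
        - (n * deriv g t * Real.sin t + n * g t * Real.cos t)) t := fun t ht =>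
    ((hg2 t ht).hasDerivAt.mul (Real.hasDerivAt_cos t)).sub
      (((hg t ht).hasDerivAt.const_mul _).mul (Real.hasDerivAt_sin t))
  rw [lap2, polar_pdx Ω hΩ _ (n + 1) (pdx f) (fun r t hr ht => polar_pdx Ω hΩ g n f hf hg r t hr ht)
    (fun t ht => (hX t ht).differentiableAt) r φ hr hφ,
    polar_pdy Ω hΩ _ (n + 1) (pdy f) (fun r t hr ht => polar_pdy Ω hΩ g n f hf hg r t hr ht)
    (fun t ht => (hY t ht).differentiableAt) r φ hr hφ, (hX φ hφ).deriv, (hY φ hφ).deriv,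
    ← add_div]
  congr 1
  push_cast
  linear_combination ((n:ℝ) ^ 2 * g φ + deriv (deriv g) φ) * hcs

/-- The angular part of the Hadamard coefficient. -/
noncomputable def Sang (m : ℕ) (k : Fin (m + 1) → ℤ) (θ : Fin (m + 1) → ℝ) (ν : ℕ) (ϕ t : ℝ) : ℝ :=
  ∑ i, cF m k i * PsiF m k θ i t * PsiF m k θ i ϕ *
      (Polynomial.derivative^[ν] (Polynomial.Chebyshev.T ℝ (k i))).eval (Real.cos (t - ϕ))

lemma chebcos_hasDerivAt (p : Polynomial ℝ) (ν : ℕ) (ϕ t : ℝ) :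
    HasDerivAt (fun t => (Polynomial.derivative^[ν] p).eval (Real.cos (t - ϕ)))
      ((Polynomial.derivative^[ν + 1] p).eval (Real.cos (t - ϕ)) * (-Real.sin (t - ϕ))) t := by
  have h1 : HasDerivAt (fun t : ℝ => Real.cos (t - ϕ)) (-Real.sin (t - ϕ)) t := by
    simpa using ((hasDerivAt_id t).sub_const ϕ).cos
  have h2 := ((Polynomial.derivative^[ν] p).hasDerivAt (Real.cos (t - ϕ))).comp t h1
  rw [← Function.iterate_succ_apply' Polynomial.derivative] at h2
  exact h2

lemma psi_hasDerivAt (m : ℕ) (k : Fin (m + 1) → ℤ) (θ : Fin (m + 1) → ℝ) (i : Fin (m + 1)) (t : ℝ)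
    (ht : Wfn m k θ t ≠ 0) : HasDerivAt (PsiF m k θ i) (deriv (PsiF m k θ i) t) t :=
  ((wr_quot_contDiffAt (chiF m k θ) (chiF_contDiff m k θ) i t ht).differentiableAt (by simp)).hasDerivAt

lemma psi_hasDerivAt2 (m : ℕ) (k : Fin (m + 1) → ℤ) (θ : Fin (m + 1) → ℝ) (i : Fin (m + 1)) (t : ℝ)
    (ht : Wfn m k θ t ≠ 0) : HasDerivAt (deriv (PsiF m k θ i))
      (-((k i : ℝ) ^ 2 + 2 * deriv (deriv fun s => Real.log (Wfn m k θ s)) t) * PsiF m k θ i t) t := by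
  have h := ((contDiffAt_deriv_top (wr_quot_contDiffAt (chiF m k θ) (chiF_contDiff m k θ) i t ht)).differentiableAt
    (by simp)).hasDerivAt
  rw [wr_crum (chiF m k θ) (chiF_contDiff m k θ) (fun i => (k i : ℝ) ^ 2)
    (fun i j t => chiF_rec m k θ i j t) t ht i] at h
  exact h

lemma Sang_hasDerivAt (m : ℕ) (k : Fin (m + 1) → ℤ) (θ : Fin (m + 1) → ℝ) (ν : ℕ) (ϕ t : ℝ)
    (ht : Wfn m k θ t ≠ 0) :
    HasDerivAt (Sang m k θ ν ϕ) (∑ i, (cF m k i * deriv (PsiF m k θ i) t * PsiF m k θ i ϕ *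
      (Polynomial.derivative^[ν] (Polynomial.Chebyshev.T ℝ (k i))).eval (Real.cos (t - ϕ)) +
      cF m k i * PsiF m k θ i t * PsiF m k θ i ϕ *
      ((Polynomial.derivative^[ν + 1] (Polynomial.Chebyshev.T ℝ (k i))).eval (Real.cos (t - ϕ)) *
        (-Real.sin (t - ϕ))))) t :=
  HasDerivAt.fun_sum fun i _ =>
    (((psi_hasDerivAt m k θ i t ht).const_mul (cF m k i)).mul_const (PsiF m k θ i ϕ)).mul
      (chebcos_hasDerivAt _ ν ϕ t)

lemma Sang_hasDerivAt2 (m : ℕ) (k : Fin (m + 1) → ℤ) (θ : Fin (m + 1) → ℝ) (ν : ℕ) (ϕ t : ℝ)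
    (ht : Wfn m k θ t ≠ 0) :
    HasDerivAt (deriv (Sang m k θ ν ϕ)) (-2 * deriv (deriv fun s => Real.log (Wfn m k θ s)) t * Sang m k θ ν ϕ t
      - (ν : ℝ) ^ 2 * Sang m k θ ν ϕ t
      - 2 * ((ν + 1) * Real.cos (t - ϕ) * Sang m k θ (ν + 1) ϕ t
        + Real.sin (t - ϕ) * deriv (Sang m k θ (ν + 1) ϕ) t)) t := by
  have hopen : ∀ᶠ s in nhds t, Wfn m k θ s ≠ 0 :=
    (wr_contDiff _ (chiF_contDiff m k θ)).continuous.continuousAt.eventually_ne ht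
  have heq := hopen.mono fun s hs => (Sang_hasDerivAt m k θ ν ϕ s hs).deriv
  refine HasDerivAt.congr_of_eventuallyEq ?_ heq
  have hsin : HasDerivAt (fun t : ℝ => -Real.sin (t - ϕ)) (-Real.cos (t - ϕ)) t := by
    have h0 : HasDerivAt (fun t : ℝ => Real.sin (t - ϕ)) (Real.cos (t - ϕ)) t := by
      simpa using ((hasDerivAt_id t).sub_const ϕ).sin
    exact h0.fun_neg
  have h := HasDerivAt.fun_sum (u := Finset.univ) fun i _ =>
    ((((psi_hasDerivAt2 m k θ i t ht).const_mul (cF m k i)).mul_const (PsiF m k θ i ϕ)).mul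
      (chebcos_hasDerivAt (Polynomial.Chebyshev.T ℝ (k i)) ν ϕ t)).add
    ((((psi_hasDerivAt m k θ i t ht).const_mul (cF m k i)).mul_const (PsiF m k θ i ϕ)).mul
      ((chebcos_hasDerivAt (Polynomial.Chebyshev.T ℝ (k i)) (ν + 1) ϕ t).mul hsin))
  refine h.congr_deriv ?_
  rw [(Sang_hasDerivAt m k θ (ν + 1) ϕ t ht).deriv]
  simp only [Sang, Finset.mul_sum, ← Finset.sum_add_distrib, ← Finset.sum_sub_distrib]
  refine Finset.sum_congr rfl fun i _ => ?_
  have hT := Polynomial.Chebyshev.one_sub_X_sq_mul_iterate_derivative_T_eval (R := ℝ) (k i) ν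
    (Real.cos (t - ϕ))
  have hcs := Real.sin_sq_add_cos_sq (t - ϕ)
  have hTsin : Real.sin (t - ϕ) ^ 2 *
      (Polynomial.derivative^[ν + 2] (Polynomial.Chebyshev.T ℝ (k i))).eval (Real.cos (t - ϕ)) =
      (2 * ν + 1) * Real.cos (t - ϕ) *
      (Polynomial.derivative^[ν + 1] (Polynomial.Chebyshev.T ℝ (k i))).eval (Real.cos (t - ϕ)) -
      ((k i : ℝ) ^ 2 - ν ^ 2) *
      (Polynomial.derivative^[ν] (Polynomial.Chebyshev.T ℝ (k i))).eval (Real.cos (t - ϕ)) := by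
    rw [← hT, ← hcs]; ring
  simp only [Pi.mul_apply]
  linear_combination (-cF m k i * PsiF m k θ i t * PsiF m k θ i ϕ) * hTsin

/-- **Theorem 2 (transport equations).** For the potential `V_k` of Berest–Loutsenko,
the functions `U_ν` given by the explicit formula satisfy `U_0 = 1` and the Hadamard
transport equations `⟨x − ξ, ∇_x U_ν⟩ + ν U_ν = −(−Δ_x U_{ν−1} + V_k(x) U_{ν−1})`. -/
theorem hadamard_transport (m : ℕ) (hm : 1 ≤ m)
    (k : Fin (m + 1) → ℤ) (hk0 : k 0 = 0) (hk : StrictMono k)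
    (θ : Fin (m + 1) → ℝ) (hθ0 : θ 0 = 0)
    (U : ℕ → ℝ × ℝ → ℝ × ℝ → ℝ) (V : ℝ × ℝ → ℝ)
    (hU : ∀ (ν : ℕ) (r φ ρ ϕ : ℝ), 0 < r → 0 < ρ →
      Wfn m k θ φ ≠ 0 → Wfn m k θ ϕ ≠ 0 →
      U ν (r * Real.cos φ, r * Real.sin φ) (ρ * Real.cos ϕ, ρ * Real.sin ϕ)
        = Ucoef m k θ ν r φ ρ ϕ)
    (hV : ∀ (r φ : ℝ), 0 < r → Wfn m k θ φ ≠ 0 →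
      V (r * Real.cos φ, r * Real.sin φ) = Vpot m k θ r φ) :
    ∀ (ν : ℕ) (r φ ρ ϕ : ℝ), 1 ≤ ν → 0 < r → 0 < ρ →
      Wfn m k θ φ ≠ 0 → Wfn m k θ ϕ ≠ 0 →
      U 0 (r * Real.cos φ, r * Real.sin φ) (ρ * Real.cos ϕ, ρ * Real.sin ϕ) = 1 ∧
      (r * Real.cos φ - ρ * Real.cos ϕ) *
          pdx (fun y => U ν y (ρ * Real.cos ϕ, ρ * Real.sin ϕ))
            (r * Real.cos φ, r * Real.sin φ) +
        (r * Real.sin φ - ρ * Real.sin ϕ) *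
          pdy (fun y => U ν y (ρ * Real.cos ϕ, ρ * Real.sin ϕ))
            (r * Real.cos φ, r * Real.sin φ) +
        (ν : ℝ) * U ν (r * Real.cos φ, r * Real.sin φ) (ρ * Real.cos ϕ, ρ * Real.sin ϕ)
      = -(-lap2 (fun y => U (ν - 1) y (ρ * Real.cos ϕ, ρ * Real.sin ϕ))
            (r * Real.cos φ, r * Real.sin φ) +
          V (r * Real.cos φ, r * Real.sin φ) *
            U (ν - 1) (r * Real.cos φ, r * Real.sin φ) (ρ * Real.cos ϕ, ρ * Real.sin ϕ)) := by
  intro ν r φ ρ ϕ hν hr hρ hφ hϕ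
  have hU0 : U 0 (r * Real.cos φ, r * Real.sin φ) (ρ * Real.cos ϕ, ρ * Real.sin ϕ) = 1 := by
    rw [hU 0 r φ ρ ϕ hr hρ hφ hϕ, Ucoef]
    simp only [pow_zero, div_one, one_mul, Function.iterate_zero, id_eq,
      Polynomial.Chebyshev.T_real_cos]
    exact U_zero m hm k hk0 hk θ hθ0 φ ϕ hφ hϕ
  refine ⟨hU0, ?_⟩
  obtain ⟨n, rfl⟩ : ∃ n, ν = n + 1 := ⟨ν - 1, by omega⟩
  rw [Nat.add_sub_cancel]
  let Ω : Set ℝ := {t | Wfn m k θ t ≠ 0}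
  have hΩ : IsOpen Ω :=
    isOpen_ne_fun (wr_contDiff _ (chiF_contDiff m k θ)).continuous continuous_const
  let g : ℕ → ℝ → ℝ := fun ν t => (-2 : ℝ) ^ ν / ρ ^ ν * Sang m k θ ν ϕ t
  have hg1 : ∀ ν t, t ∈ Ω → HasDerivAt (g ν) ((-2 : ℝ) ^ ν / ρ ^ ν * deriv (Sang m k θ ν ϕ) t) t :=
    fun ν t ht =>
      ((Sang_hasDerivAt m k θ ν ϕ t ht).differentiableAt.hasDerivAt).const_mul _
  have hg2 : ∀ ν t, t ∈ Ω → HasDerivAt (deriv (g ν))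
      ((-2 : ℝ) ^ ν / ρ ^ ν * deriv (deriv (Sang m k θ ν ϕ)) t) t := by
    intro ν t ht
    have heq : deriv (g ν) =ᶠ[nhds t] fun s => (-2 : ℝ) ^ ν / ρ ^ ν * deriv (Sang m k θ ν ϕ) s :=
      Filter.mem_of_superset (hΩ.mem_nhds ht) fun s hs => (hg1 ν s hs).deriv
    exact HasDerivAt.congr_of_eventuallyEq
      (((Sang_hasDerivAt2 m k θ ν ϕ t ht).differentiableAt.hasDerivAt).const_mul _) heq
  have hf : ∀ ν r t, 0 < r → t ∈ Ω →
      U ν (r * Real.cos t, r * Real.sin t) (ρ * Real.cos ϕ, ρ * Real.sin ϕ) = g ν t / r ^ ν := by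
    intro ν r t hr ht
    rw [hU ν r t ρ ϕ hr hρ ht hϕ, Ucoef]
    simp only [g, Sang, mul_pow]
    field_simp
  rw [polar_pdx Ω hΩ (g (n+1)) (n+1) _ (hf (n+1)) (fun t ht => (hg1 _ t ht).differentiableAt) r φ hr hφ,
    polar_pdy Ω hΩ (g (n+1)) (n+1) _ (hf (n+1)) (fun t ht => (hg1 _ t ht).differentiableAt) r φ hr hφ,
    polar_lap Ω hΩ (g n) n _ (hf n) (fun t ht => (hg1 _ t ht).differentiableAt)
      (fun t ht => (hg2 _ t ht).differentiableAt) r φ hr hφ,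
    hf (n+1) r φ hr hφ, hf n r φ hr hφ, hV r φ hr hφ, Vpot, (hg1 (n+1) φ hφ).deriv, (hg2 n φ hφ).deriv,
    (Sang_hasDerivAt2 m k θ n ϕ φ hφ).deriv]
  simp only [g]
  rw [Real.cos_sub, Real.sin_sub]
  generalize Sang m k θ n ϕ φ = S0
  generalize Sang m k θ (n+1) ϕ φ = S1
  generalize deriv (Sang m k θ (n+1) ϕ) φ = S1'
  generalize deriv (deriv fun t => Real.log (Wfn m k θ t)) φ = L
  have hcs := Real.sin_sq_add_cos_sq φ
  generalize Real.cos φ = c at *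
  generalize Real.sin φ = s at *
  rw [pow_succ (-2 : ℝ) n]
  generalize (-2 : ℝ) ^ n = A
  have hs2 : s ^ 2 = 1 - c ^ 2 := by linarith
  push_cast
  field_simp
  ring_nf
  simp only [hs2]
  ring
end

section
/- Vanishing of higher Hadamard coefficients (Huygens property). For every integer ν > k_m, the function U_ν vanishes identically: U_ν(x, ξ) = 0 for all x = (r cos φ, r sin φ), ξ = (ρ cos ϕ, ρ sin ϕ) with r > 0, ρ > 0, W(φ) ≠ 0 and W(ϕ) ≠ 0. Consequently the heat-kernel expansion of −Δ + V_k has only finitely many nonzero terms. -/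
/-- **Vanishing of higher Hadamard coefficients (Huygens property).**
For every `ν > k_m`, the Hadamard coefficient `U_ν` vanishes identically. -/
theorem hadamard_coefficients_vanish (m : ℕ) (hm : 1 ≤ m)
    (k : Fin (m + 1) → ℤ) (hk0 : k 0 = 0) (hk : StrictMono k)
    (θ : Fin (m + 1) → ℝ) (hθ0 : θ 0 = 0)
    (ν : ℕ) (hν : (k (Fin.last m) : ℤ) < (ν : ℤ)) :
    ∀ (r φ ρ ϕ : ℝ), 0 < r → 0 < ρ → Wfn m k θ φ ≠ 0 → Wfn m k θ ϕ ≠ 0 →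
      Ucoef m k θ ν r φ ρ ϕ = 0 := by
  intro r φ ρ ϕ _ _ _ _
  unfold Ucoef
  rw [Finset.sum_eq_zero, mul_zero]
  intro i _
  have h0 : 0 ≤ k i := hk0 ▸ hk.monotone (Fin.zero_le i)
  have h1 : k i ≤ k (Fin.last m) := hk.monotone (Fin.le_last i)
  have hd : (Polynomial.Chebyshev.T ℝ (k i)).natDegree < ν := by
    rw [Polynomial.Chebyshev.natDegree_T]
    omega
  rw [Polynomial.iterate_derivative_eq_zero hd, Polynomial.eval_zero, mul_zero]
end

section
/- Separation of variables (Lemma 1). Let q be a continuous real function on an open interval I, let k ≥ 0 be an integer, and let ψ be a twice differentiable function on I satisfying −ψ''(φ) + q(φ)ψ(φ) = k²·ψ(φ) for all φ ∈ I. Fix ρ ≠ 0 and define u(r, φ) := ψ(φ)·T_k((r/ρ + ρ/r)/2). Then for all r > 0 and φ ∈ I, −∂²u/∂r²(r, φ) − (1/r)·∂u/∂r(r, φ) + (1/r²)·(−∂²u/∂φ²(r, φ) + q(φ)·u(r, φ)) = 0; that is, u lies in the kernel of the Schrödinger operator −Δ + q(φ)/r² written in polar coordinates. -/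
/-- **Lemma 1 (separation of variables).** If `ψ` satisfies `−ψ'' + q ψ = k² ψ` on an open
interval, then for any `ρ ≠ 0` the function `u(r, φ) = ψ(φ) T_k((r/ρ + ρ/r)/2)` lies in the
kernel of `−∂²/∂r² − (1/r)∂/∂r + (1/r²)(−∂²/∂φ² + q(φ))`. -/
theorem separation_of_variables (a b : ℝ) (q ψ : ℝ → ℝ)
    (hq : ContinuousOn q (Set.Ioo a b)) (k : ℕ)
    (hψ : ∀ φ ∈ Set.Ioo a b, DifferentiableAt ℝ ψ φ)
    (hψ' : ∀ φ ∈ Set.Ioo a b, DifferentiableAt ℝ (deriv ψ) φ)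
    (heig : ∀ φ ∈ Set.Ioo a b, -deriv (deriv ψ) φ + q φ * ψ φ = (k : ℝ) ^ 2 * ψ φ)
    (ρ : ℝ) (hρ : ρ ≠ 0) (u : ℝ → ℝ → ℝ)
    (hu : ∀ r φ, u r φ =
      ψ φ * (Polynomial.Chebyshev.T ℝ (k : ℤ)).eval ((r / ρ + ρ / r) / 2)) :
    ∀ r : ℝ, 0 < r → ∀ φ ∈ Set.Ioo a b,
      -deriv (deriv fun s => u s φ) r - (1 / r) * deriv (fun s => u s φ) r +
        (1 / r ^ 2) * (-deriv (deriv fun t => u r t) φ + q φ * u r φ) = 0 := by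
  intro r hr φ hφ
  set P := Polynomial.Chebyshev.T ℝ (k : ℤ) with hP
  have hX : ∀ s : ℝ, 0 < s → HasDerivAt (fun s : ℝ => (s / ρ + ρ / s) / 2)
      ((1 / ρ - ρ / s ^ 2) / 2) s := by
    intro s hs
    have h1 := (hasDerivAt_id s).div_const ρ
    have h2 := (hasDerivAt_inv hs.ne').const_mul ρ
    have h3 := (h1.add h2).div_const 2
    refine HasDerivAt.congr_deriv (HasDerivAt.congr_of_eventuallyEq h3 ?_) ?_
    · exact Filter.Eventually.of_forall fun t => by simp [div_eq_mul_inv]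
    · ring
  have hX' : HasDerivAt (fun s : ℝ => (1 / ρ - ρ / s ^ 2) / 2) (ρ / r ^ 3) r := by
    have h1 := (((hasDerivAt_pow 2 r).inv (by positivity)).const_mul ρ).const_sub (1 / ρ)
    have h3 := h1.div_const 2
    refine HasDerivAt.congr_deriv (HasDerivAt.congr_of_eventuallyEq h3 ?_) ?_
    · exact Filter.Eventually.of_forall fun t => by simp [div_eq_mul_inv]
    · field_simp
      norm_num
      ring
  have hd1 : ∀ s : ℝ, 0 < s → HasDerivAt (fun s => u s φ)
      (ψ φ * (P.derivative.eval ((s / ρ + ρ / s) / 2) * ((1 / ρ - ρ / s ^ 2) / 2))) s := by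
    intro s hs
    have h := ((P.hasDerivAt ((s / ρ + ρ / s) / 2)).comp s (hX s hs)).const_mul (ψ φ)
    have e : (fun s => u s φ) = fun s => ψ φ * P.eval ((s / ρ + ρ / s) / 2) :=
      funext fun s => hu s φ
    rw [e]
    exact h
  have hd2 : HasDerivAt (deriv fun s => u s φ)
      (ψ φ * ((P.derivative.derivative.eval ((r / ρ + ρ / r) / 2) * ((1 / ρ - ρ / r ^ 2) / 2))
        * ((1 / ρ - ρ / r ^ 2) / 2)
        + P.derivative.eval ((r / ρ + ρ / r) / 2) * (ρ / r ^ 3))) r := by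
    have h := ((((P.derivative.hasDerivAt ((r / ρ + ρ / r) / 2)).comp r (hX r hr))).mul
      hX').const_mul (ψ φ)
    refine h.congr_of_eventuallyEq ?_
    filter_upwards [lt_mem_nhds hr] with s hs
    exact (hd1 s hs).deriv
  have hφ2 : deriv (deriv fun t => u r t) φ
      = deriv (deriv ψ) φ * P.eval ((r / ρ + ρ / r) / 2) := by
    have e : (fun t => u r t) = fun t => ψ t * P.eval ((r / ρ + ρ / r) / 2) :=
      funext fun t => hu r t
    rw [e]
    have e2 : (deriv fun t => ψ t * P.eval ((r / ρ + ρ / r) / 2))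
        = fun t => deriv ψ t * P.eval ((r / ρ + ρ / r) / 2) :=
      funext fun t => deriv_mul_const_field _
    rw [e2, deriv_mul_const_field]
  rw [hd2.deriv, (hd1 r hr).deriv, hφ2, hu r φ]
  have hode := congrArg (Polynomial.eval ((r / ρ + ρ / r) / 2))
    (Polynomial.Chebyshev.one_sub_X_sq_mul_derivative_derivative_T_eq_poly_in_T (R := ℝ) (k : ℤ))
  rw [← hP] at hode
  simp at hode
  have he := heig φ hφ
  set x := (r / ρ + ρ / r) / 2 with hx
  set y := (1 / ρ - ρ / r ^ 2) / 2 with hy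
  generalize P.derivative.derivative.eval x = A at *
  generalize P.derivative.eval x = B at *
  generalize P.eval x = C at *
  have i1 : (r * y) ^ 2 = x ^ 2 - 1 := by rw [hx, hy]; field_simp; ring
  have i2 : r ^ 2 * (ρ / r ^ 3) + r * y = x := by rw [hx, hy]; field_simp; ring
  have hr2 : r ^ 2 ≠ 0 := by positivity
  apply mul_left_cancel₀ hr2
  have e1 : r ^ 2 * (1 / r) = r := by field_simp
  have e2 : r ^ 2 * (1 / r ^ 2) = 1 := by field_simp
  generalize ρ / r ^ 3 = z at *
  generalize 1 / r = w at *
  generalize 1 / r ^ 2 = v at *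
  linear_combination C * he + ψ φ * hode - ψ φ * A * i1 - ψ φ * B * i2 - ψ φ * B * y * e1 + (-deriv (deriv ψ) φ * C + q φ * (ψ φ * C)) * e2
end

section
/- Eigenfunction property of the quotient Wronskians (equation (E12) of Lemma 2, an instance of Crum's theorem). For every 0 ≤ i ≤ m and every φ at which W(φ) ≠ 0, the function Ψ_i satisfies −Ψ_i''(φ) − 2·(d²/dφ²)(log W)(φ)·Ψ_i(φ) = k_i²·Ψ_i(φ); that is, Ψ_i is an eigenfunction with eigenvalue k_i² of the one-dimensional Schrödinger operator L = −d²/dφ² − 2 (log W)''. -/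
/-- Entrywise derivative of a matrix valued function. -/
def MD {n : ℕ} (A : ℝ → Matrix (Fin n) (Fin n) ℝ) (A' : Matrix (Fin n) (Fin n) ℝ) (t : ℝ) : Prop :=
  ∀ i j, HasDerivAt (fun s => A s i j) (A' i j) t

theorem MD.mul {n : ℕ} {A B : ℝ → Matrix (Fin n) (Fin n) ℝ} {A' B' : Matrix (Fin n) (Fin n) ℝ}
    {t : ℝ} (hA : MD A A' t) (hB : MD B B' t) :
    MD (fun s => A s * B s) (A' * B t + A t * B') t := by
  intro i j
  simp only [Matrix.mul_apply, Matrix.add_apply, ← Finset.sum_add_distrib]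
  exact HasDerivAt.fun_sum fun l _ => (hA i l).mul (hB l j)

theorem MD.neg {n : ℕ} {A : ℝ → Matrix (Fin n) (Fin n) ℝ} {A' : Matrix (Fin n) (Fin n) ℝ}
    {t : ℝ} (hA : MD A A' t) : MD (fun s => -A s) (-A') t :=
  fun i j => (hA i j).neg

theorem MD.unique {n : ℕ} {A : ℝ → Matrix (Fin n) (Fin n) ℝ} {A' B' : Matrix (Fin n) (Fin n) ℝ}
    {t : ℝ} (hA : MD A A' t) (hB : MD A B' t) : A' = B' := by
  ext i j
  exact (hA i j).unique (hB i j)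

theorem MD.congr {n : ℕ} {A B : ℝ → Matrix (Fin n) (Fin n) ℝ} {A' : Matrix (Fin n) (Fin n) ℝ}
    {t : ℝ} (hA : MD A A' t) (h : ∀ᶠ s in nhds t, B s = A s) : MD B A' t := by
  intro i j
  refine (hA i j).congr_of_eventuallyEq ?_
  filter_upwards [h] with s hs
  rw [hs]

theorem MD.det {n : ℕ} {A : ℝ → Matrix (Fin n) (Fin n) ℝ} {A' : Matrix (Fin n) (Fin n) ℝ}
    {t : ℝ} (hA : MD A A' t) :
    HasDerivAt (fun s => (A s).det) (((A t).adjugate * A').trace) t := by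
  have h1 : ((A t).adjugate * A').trace = ∑ j, ((A t).updateCol j (fun i => A' i j)).det := by
    simp only [Matrix.trace, Matrix.diag_apply]
    refine Finset.sum_congr rfl fun j _ => ?_
    rw [← Matrix.cramer_apply, Matrix.cramer_eq_adjugate_mulVec]
    rfl
  rw [h1]
  simp only [Matrix.det_apply']
  rw [Finset.sum_comm]
  refine HasDerivAt.fun_sum fun σ _ => ?_
  rw [← Finset.mul_sum]
  refine HasDerivAt.const_mul _ ?_
  have := HasDerivAt.fun_finsetProd (u := Finset.univ) (x := t) (f := fun j s => A s (σ j) j)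
    (f' := fun j => A' (σ j) j) (fun j _ => hA (σ j) j)
  refine this.congr_deriv ?_
  refine Finset.sum_congr rfl fun j _ => ?_
  rw [← Finset.mul_prod_erase Finset.univ _ (Finset.mem_univ j), Matrix.updateCol_self, smul_eq_mul,
    mul_comm]
  congr 1
  refine Finset.prod_congr rfl fun l hl => ?_
  rw [Matrix.updateCol_ne (Finset.ne_of_mem_erase hl)]

theorem MD.inv {n : ℕ} {A : ℝ → Matrix (Fin n) (Fin n) ℝ} {A' : Matrix (Fin n) (Fin n) ℝ}
    {t : ℝ} (hA : MD A A' t) (h0 : (A t).det ≠ 0) :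
    MD (fun s => (A s)⁻¹) (-((A t)⁻¹ * A' * (A t)⁻¹)) t := by
  have hd : ∀ i j, DifferentiableAt ℝ (fun s => (A s)⁻¹ i j) t := by
    intro i j
    have e : (fun s => (A s)⁻¹ i j)
        = fun s => ((A s).det)⁻¹ * ((A s).updateRow j (Pi.single i 1)).det := by
      funext s
      rw [Matrix.inv_def, Matrix.smul_apply, Matrix.adjugate_apply, Ring.inverse_eq_inv',
        smul_eq_mul]
    rw [e]
    have hU : MD (fun s => (A s).updateRow j (Pi.single i 1)) (A'.updateRow j 0) t := by
      intro a b
      by_cases h : a = j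
      · subst h
        simp only [Matrix.updateRow_self]
        exact hasDerivAt_const _ _
      · simp only [Matrix.updateRow_ne h]
        exact hA a b
    exact (hA.det.differentiableAt.inv h0).mul hU.det.differentiableAt
  have hP : MD (fun s => (A s)⁻¹) (Matrix.of fun i j => deriv (fun s => (A s)⁻¹ i j) t) t :=
    fun i j => (hd i j).hasDerivAt
  have hne : ∀ᶠ s in nhds t, (A s).det ≠ 0 :=
    hA.det.continuousAt.eventually_ne h0
  have h1 : MD (fun _ => (1 : Matrix (Fin n) (Fin n) ℝ)) 0 t := fun i j => hasDerivAt_const _ _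
  have h2 := h1.congr (B := fun s => (A s)⁻¹ * A s) (by
    filter_upwards [hne] with s hs
    exact Matrix.nonsing_inv_mul _ (isUnit_iff_ne_zero.mpr hs))
  have h3 := (hP.mul hA).unique h2
  generalize (Matrix.of fun i j => deriv (fun s => (A s)⁻¹ i j) t) = P' at hP h3
  have h4 : A t * (A t)⁻¹ = 1 := Matrix.mul_nonsing_inv _ (isUnit_iff_ne_zero.mpr h0)
  have h5 : P' = -((A t)⁻¹ * A' * (A t)⁻¹) := by
    have := congrArg (· * (A t)⁻¹) h3
    simp only [Matrix.add_mul, Matrix.zero_mul] at this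
    rw [Matrix.mul_assoc P', h4, Matrix.mul_one] at this
    exact eq_neg_of_add_eq_zero_left this
  rw [← h5]
  exact hP

/-- Matrix form of the Crum identity. -/
theorem crum_matrix {m : ℕ} (M M1 : ℝ → Matrix (Fin (m + 1)) (Fin (m + 1)) ℝ)
    (d : Fin (m + 1) → ℝ)
    (h1 : ∀ t, MD M (M1 t) t) (h2 : ∀ t, MD M1 (Matrix.diagonal d * M t) t)
    (hc : ∀ t i (j : Fin m), M1 t i j.castSucc = M t i j.succ)
    (t : ℝ) (h0 : (M t).det ≠ 0) (i : Fin (m + 1)) :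
    deriv (deriv fun s => (M s)⁻¹ (Fin.last m) i) t
      = d i * (M t)⁻¹ (Fin.last m) i
        - 2 * deriv (deriv fun s => Real.log (M s).det) t * (M t)⁻¹ (Fin.last m) i := by
  have hne : ∀ᶠ s in nhds t, (M s).det ≠ 0 := (h1 t).det.continuousAt.eventually_ne h0
  have hPM : ∀ s, (M s).det ≠ 0 → (M s)⁻¹ * M s = 1 := fun s hs =>
    Matrix.nonsing_inv_mul _ (isUnit_iff_ne_zero.mpr hs)
  have hMP : ∀ s, (M s).det ≠ 0 → M s * (M s)⁻¹ = 1 := fun s hs =>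
    Matrix.mul_nonsing_inv _ (isUnit_iff_ne_zero.mpr hs)
  -- the companion matrix
  have hA := ((h1 t).inv h0).mul (h2 t)
  have hP1 : ∀ s, (M s).det ≠ 0 → MD (fun s => (M s)⁻¹) (-((M s)⁻¹ * M1 s * (M s)⁻¹)) s :=
    fun s hs => (h1 s).inv hs
  have hP2 := (hA.mul ((h1 t).inv h0)).neg
  set A' := -((M t)⁻¹ * M1 t * (M t)⁻¹) * M1 t + (M t)⁻¹ * (Matrix.diagonal d * M t) with hA'
  have hcol : ∀ s, (M s).det ≠ 0 → ∀ a (j : Fin m),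
      ((M s)⁻¹ * M1 s) a j.castSucc = (1 : Matrix (Fin (m + 1)) (Fin (m + 1)) ℝ) a j.succ := by
    intro s hs a j
    rw [← hPM s hs]
    simp only [Matrix.mul_apply, hc]
  have hlog : ∀ s, (M s).det ≠ 0 →
      deriv (fun s => Real.log (M s).det) s = ((M s)⁻¹ * M1 s) (Fin.last m) (Fin.last m) := by
    intro s hs
    have e := ((h1 s).det.log hs).deriv
    rw [e]
    have e2 : ((M s)⁻¹ * M1 s).trace = ((M s)⁻¹ * M1 s) (Fin.last m) (Fin.last m) := by
      rw [Matrix.trace, Fin.sum_univ_castSucc]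
      simp only [Matrix.diag_apply, hcol s hs]
      rw [Finset.sum_eq_zero, zero_add]
      intro j _
      exact Matrix.one_apply_ne (Fin.castSucc_lt_succ).ne
    rw [← e2, Matrix.inv_def, Matrix.smul_mul, Matrix.trace_smul, Ring.inverse_eq_inv', smul_eq_mul,
      div_eq_inv_mul]
  have hlog2 : deriv (deriv fun s => Real.log (M s).det) t = A' (Fin.last m) (Fin.last m) := by
    refine HasDerivAt.deriv ((hA (Fin.last m) (Fin.last m)).congr_of_eventuallyEq ?_)
    filter_upwards [hne] with s hs
    exact hlog s hs
  have hA0 : ∀ j : Fin m, A' (Fin.last m) j.castSucc = 0 := by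
    intro j
    refine (hA (Fin.last m) j.castSucc).unique ?_
    refine (hasDerivAt_const t
      ((1 : Matrix (Fin (m + 1)) (Fin (m + 1)) ℝ) (Fin.last m) j.succ)).congr_of_eventuallyEq ?_
    filter_upwards [hne] with s hs
    exact hcol s hs _ j
  have hdd : deriv (deriv fun s => (M s)⁻¹ (Fin.last m) i) t
      = (-(A' * (M t)⁻¹ + (M t)⁻¹ * M1 t * -((M t)⁻¹ * M1 t * (M t)⁻¹))) (Fin.last m) i := by
    refine HasDerivAt.deriv ((hP2 (Fin.last m) i).congr_of_eventuallyEq ?_)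
    filter_upwards [hne] with s hs
    exact (hP1 s hs (Fin.last m) i).deriv
  have key : -(A' * (M t)⁻¹ + (M t)⁻¹ * M1 t * -((M t)⁻¹ * M1 t * (M t)⁻¹))
      = (M t)⁻¹ * Matrix.diagonal d - (A' * (M t)⁻¹ + A' * (M t)⁻¹) := by
    have e : (M t)⁻¹ * M1 t * ((M t)⁻¹ * M1 t * (M t)⁻¹)
        = (M t)⁻¹ * Matrix.diagonal d - A' * (M t)⁻¹ := by
      have e3 : (M t)⁻¹ * Matrix.diagonal d
          = (M t)⁻¹ * (Matrix.diagonal d * M t) * (M t)⁻¹ := by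
        rw [Matrix.mul_assoc, Matrix.mul_assoc, hMP t h0, Matrix.mul_one]
      rw [e3, hA']
      noncomm_ring
    rw [Matrix.mul_neg, e]
    abel
  have hrow : (A' * (M t)⁻¹) (Fin.last m) i
      = A' (Fin.last m) (Fin.last m) * (M t)⁻¹ (Fin.last m) i := by
    rw [Matrix.mul_apply, Fin.sum_univ_castSucc]
    simp [hA0]
  rw [hdd, key, hlog2, Matrix.sub_apply, Matrix.add_apply, hrow, Matrix.mul_diagonal]
  ring

theorem chiF_iter (m : ℕ) (k : Fin (m + 1) → ℤ) (θ : Fin (m + 1) → ℝ) (i : Fin (m + 1))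
    (n : ℕ) (t : ℝ) :
    HasDerivAt (iteratedDeriv n (chiF m k θ i)) (iteratedDeriv (n + 1) (chiF m k θ i) t) t := by
  have h : ContDiff ℝ ((n + 1 : ℕ) : WithTop ℕ∞) (chiF m k θ i) := by
    unfold chiF
    fun_prop
  rw [iteratedDeriv_succ]
  refine DifferentiableAt.hasDerivAt ?_
  exact (h.differentiable_iteratedDeriv n (by exact_mod_cast Nat.lt_succ_self n)) t

theorem chiF_iter_two (m : ℕ) (k : Fin (m + 1) → ℤ) (θ : Fin (m + 1) → ℝ) (i : Fin (m + 1))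
    (n : ℕ) (t : ℝ) :
    iteratedDeriv (n + 2) (chiF m k θ i) t
      = -(k i : ℝ) ^ 2 * iteratedDeriv n (chiF m k θ i) t := by
  have hl : ∀ s, HasDerivAt (fun φ => (k i : ℝ) * φ + θ i) (k i : ℝ) s := fun s => by
    simpa using ((hasDerivAt_id s).const_mul (k i : ℝ)).add_const (θ i)
  have e1 : deriv (chiF m k θ i) = fun φ => -Real.sin ((k i : ℝ) * φ + θ i) * k i := by
    funext s
    exact (hl s).cos.deriv
  have e2 : deriv (deriv (chiF m k θ i)) = fun φ => -(k i : ℝ) ^ 2 * chiF m k θ i φ := by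
    rw [e1]
    funext s
    rw [((hl s).sin.fun_neg.mul_const _).deriv]
    unfold chiF
    ring
  rw [iteratedDeriv_succ', iteratedDeriv_succ', e2, iteratedDeriv_const_mul_field]

/-- **Equation (E12) of Lemma 2 (Crum's theorem).** Each quotient Wronskian `Ψ_i` is an
eigenfunction of the one-dimensional Schrödinger operator `L = −d²/dφ² − 2 (log W)''`
with eigenvalue `k_i²`. -/
theorem psi_eigenfunction (m : ℕ) (hm : 1 ≤ m)
    (k : Fin (m + 1) → ℤ) (hk0 : k 0 = 0) (hk : StrictMono k)
    (θ : Fin (m + 1) → ℝ) (hθ0 : θ 0 = 0)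
    (i : Fin (m + 1)) (φ : ℝ) (hW : Wfn m k θ φ ≠ 0) :
    -deriv (deriv (PsiF m k θ i)) φ -
        2 * deriv (deriv fun t => Real.log (Wfn m k θ t)) φ * PsiF m k θ i φ
      = (k i : ℝ) ^ 2 * PsiF m k θ i φ := by
  set M : ℝ → Matrix (Fin (m + 1)) (Fin (m + 1)) ℝ := fun t =>
    Matrix.of fun i j => iteratedDeriv (j : ℕ) (chiF m k θ i) t with hM
  set M1 : ℝ → Matrix (Fin (m + 1)) (Fin (m + 1)) ℝ := fun t =>
    Matrix.of fun i j => iteratedDeriv ((j : ℕ) + 1) (chiF m k θ i) t with hM1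
  have hdet : ∀ t, Wfn m k θ t = (M t).det := fun t => rfl
  have main := crum_matrix M M1 (fun i => -(k i : ℝ) ^ 2)
    (fun t i j => chiF_iter m k θ i j t)
    (fun t i j => by
      rw [Matrix.diagonal_mul]
      exact (chiF_iter m k θ i (j + 1) t).congr_deriv (chiF_iter_two m k θ i j t))
    (fun t i j => by simp [hM, hM1])
    φ hW i
  have hPsi : PsiF m k θ i
      = fun t => (-1 : ℝ) ^ ((i : ℕ) + m) * (M t)⁻¹ (Fin.last m) i := by
    funext t
    rw [Matrix.inv_def, Matrix.smul_apply, Matrix.adjugate_fin_succ_eq_det_submatrix,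
      Ring.inverse_eq_inv', smul_eq_mul, Fin.val_last, mul_left_comm, ← mul_assoc ((-1 : ℝ) ^ _),
      ← mul_pow]
    have e : wronsk (fun j : Fin m => chiF m k θ (i.succAbove j)) t
        = ((M t).submatrix i.succAbove (Fin.last m).succAbove).det := by
      unfold wronsk
      congr 1
      ext a b
      simp [hM]
    simp only [PsiF, e, hdet]
    simp [div_eq_inv_mul]
  have hd : deriv (deriv (PsiF m k θ i)) φ
      = (-1 : ℝ) ^ ((i : ℕ) + m) * deriv (deriv fun s => (M s)⁻¹ (Fin.last m) i) φ := by
    rw [hPsi]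
    have : deriv (fun t => (-1 : ℝ) ^ ((i : ℕ) + m) * (M t)⁻¹ (Fin.last m) i)
        = fun t => (-1 : ℝ) ^ ((i : ℕ) + m) * deriv (fun s => (M s)⁻¹ (Fin.last m) i) t := by
      funext t
      exact deriv_const_mul_field _
    rw [this]
    exact deriv_const_mul_field _
  rw [hd, main, hPsi]
  simp only [hdet]
  ring
end

section
/- Bilinear Wronskian identity (equation (E13) of Lemma 2). For all real φ and ϕ at which W(φ) ≠ 0 and W(ϕ) ≠ 0, one has ∑_{i=0}^m c_i · Ψ_i(φ) · Ψ_i(ϕ) · cos(k_i (φ − ϕ)) = 1. -/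
open Polynomial in
lemma bw_moment (m r : ℕ) (hr : r ≤ m) (x u : Fin (m + 1) → ℝ) (hx : Function.Injective x)
    (hu : ∀ p < r, ∑ i, x i ^ p * u i = 0) :
    ∃ Q : ℝ[X], Q.natDegree ≤ m - r ∧
      (∀ i, Q.eval (x i) = (∏ j ∈ Finset.univ.erase i, (x i - x j)) * u i) ∧
      Q.coeff (m - r) = ∑ i, x i ^ r * u i := by
  have hinj : Set.InjOn x (Finset.univ : Finset (Fin (m + 1))) := hx.injOn
  have hc : ∀ i, (∏ j ∈ Finset.univ.erase i, (x i - x j)) ≠ 0 := by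
    intro i
    refine Finset.prod_ne_zero_iff.mpr fun j hj => ?_
    exact sub_ne_zero.mpr fun h => (Finset.ne_of_mem_erase hj) (hx h).symm
  set Q : ℝ[X] := Lagrange.interpolate Finset.univ x
    (fun i => (∏ j ∈ Finset.univ.erase i, (x i - x j)) * u i) with hQ
  have hev : ∀ i, Q.eval (x i) = (∏ j ∈ Finset.univ.erase i, (x i - x j)) * u i := fun i =>
    Lagrange.eval_interpolate_at_node _ hinj (Finset.mem_univ i)
  have hdeg : Q.natDegree < m + 1 := by
    have h := Lagrange.degree_interpolate_lt
      (fun i => (∏ j ∈ Finset.univ.erase i, (x i - x j)) * u i) hinj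
    rw [Finset.card_univ, Fintype.card_fin, ← hQ] at h
    by_cases h0 : Q = 0
    · simp [h0]
    · exact (natDegree_lt_iff_degree_lt h0).mpr (by exact_mod_cast h)
  have key : ∀ p ≤ m, Q.natDegree ≤ m - p → Q.coeff (m - p) = ∑ i, x i ^ p * u i := by
    intro p hp hd
    have hnd : (X ^ p * Q).natDegree ≤ m := by
      refine natDegree_mul_le.trans ?_
      rw [natDegree_X_pow]; omega
    have h := Lagrange.coeff_eq_sum (s := Finset.univ) (v := x) (P := X ^ p * Q) hinj (by
      rw [Finset.card_univ, Fintype.card_fin]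
      exact lt_of_le_of_lt degree_le_natDegree (by exact_mod_cast Nat.lt_succ_of_le hnd))
    rw [Finset.card_univ, Fintype.card_fin, Nat.add_sub_cancel] at h
    have h2 : (X ^ p * Q).coeff m = Q.coeff (m - p) := by
      rw [coeff_X_pow_mul', if_pos hp]
    rw [← h2, h]
    refine Finset.sum_congr rfl fun i _ => ?_
    rw [eval_mul, eval_pow, eval_X, hev]
    field_simp [hc i]
  have hle : Q.natDegree ≤ m - r := by
    by_contra hlt
    push Not at hlt
    have h1 := key (m - Q.natDegree) (by omega) (by omega)
    rw [hu _ (by omega), show m - (m - Q.natDegree) = Q.natDegree by omega] at h1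
    have : Q = 0 := leadingCoeff_eq_zero.mp h1
    rw [this] at hlt
    simp at hlt
  exact ⟨Q, hle, hev, key r hr hle⟩

open Polynomial in
lemma bw_sum (m : ℕ) (x : Fin (m + 1) → ℝ) (hx : Function.Injective x) (P : ℝ[X])
    (hP : P.natDegree ≤ m) :
    ∑ i, P.eval (x i) / (∏ j ∈ Finset.univ.erase i, (x i - x j)) = P.coeff m := by
  have h := Lagrange.coeff_eq_sum (s := Finset.univ) (v := x) (P := P) hx.injOn (by
      rw [Finset.card_univ, Fintype.card_fin]
      exact lt_of_le_of_lt degree_le_natDegree (by exact_mod_cast Nat.lt_succ_of_le hP))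
  rw [Finset.card_univ, Fintype.card_fin, Nat.add_sub_cancel] at h
  exact h.symm

/-- Pairing of two vectors with vanishing moments. -/
lemma bw_pair (m r : ℕ) (hr : r ≤ m) (x u v : Fin (m + 1) → ℝ) (hx : Function.Injective x)
    (hu : ∀ p < r, ∑ i, x i ^ p * u i = 0) (hv : ∀ p < r, ∑ i, x i ^ p * v i = 0)
    (hs : 2 * (m - r) ≤ m) :
    ∑ i, (∏ j ∈ Finset.univ.erase i, (x i - x j)) * (u i * v i) =
      if 2 * (m - r) = m then (∑ i, x i ^ r * u i) * (∑ i, x i ^ r * v i) else 0 := by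
  obtain ⟨Q, hQd, hQe, hQc⟩ := bw_moment m r hr x u hx hu
  obtain ⟨R, hRd, hRe, hRc⟩ := bw_moment m r hr x v hx hv
  have hc : ∀ i, (∏ j ∈ Finset.univ.erase i, (x i - x j)) ≠ 0 := by
    intro i
    refine Finset.prod_ne_zero_iff.mpr fun j hj => ?_
    exact sub_ne_zero.mpr fun h => (Finset.ne_of_mem_erase hj) (hx h).symm
  have hd : (Q * R).natDegree ≤ 2 * (m - r) := Polynomial.natDegree_mul_le.trans (by omega)
  have h := bw_sum m x hx (Q * R) (hd.trans hs)
  have h' : ∑ i, (∏ j ∈ Finset.univ.erase i, (x i - x j)) * (u i * v i) = (Q * R).coeff m := by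
    rw [← h]
    refine Finset.sum_congr rfl fun i _ => ?_
    rw [Polynomial.eval_mul, hQe, hRe]
    field_simp [hc i]
  rw [h']
  split_ifs with he
  · rw [← hQc, ← hRc, ← Polynomial.coeff_mul_add_eq_of_natDegree_le hQd hRd]
    congr 1; omega
  · exact Polynomial.coeff_eq_zero_of_natDegree_lt (by omega)

/-- Pairing with weight `1 / x`, for vectors vanishing at the node `0`. -/
lemma bw_pair' (m r : ℕ) (hr : r ≤ m) (x u v : Fin (m + 1) → ℝ) (hx : Function.Injective x)
    (hx0 : x 0 = 0) (hu0 : u 0 = 0) (hv0 : v 0 = 0) (hrm : r < m)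
    (hu : ∀ p < r, ∑ i, x i ^ p * u i = 0) (hv : ∀ p < r, ∑ i, x i ^ p * v i = 0)
    (hs : 2 * (m - r) ≤ m + 1) :
    ∑ i, (∏ j ∈ Finset.univ.erase i, (x i - x j)) * (u i * v i / x i) =
      if 2 * (m - r) = m + 1 then (∑ i, x i ^ r * u i) * (∑ i, x i ^ r * v i) else 0 := by
  obtain ⟨Q, hQd, hQe, hQc⟩ := bw_moment m r hr x u hx hu
  obtain ⟨R, hRd, hRe, hRc⟩ := bw_moment m r hr x v hx hv
  have hc : ∀ i, (∏ j ∈ Finset.univ.erase i, (x i - x j)) ≠ 0 := by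
    intro i
    refine Finset.prod_ne_zero_iff.mpr fun j hj => ?_
    exact sub_ne_zero.mpr fun h => (Finset.ne_of_mem_erase hj) (hx h).symm
  have hR0 : R.coeff 0 = 0 := by
    have h0 := hRe 0
    rw [hx0, hv0, mul_zero] at h0
    rw [Polynomial.coeff_zero_eq_eval_zero, h0]
  have hRX : ∀ t, R.eval t = R.divX.eval t * t := by
    intro t
    conv_lhs => rw [← Polynomial.divX_mul_X_add R]
    simp [hR0]
  have hDd : R.divX.natDegree ≤ m - r - 1 := by
    rw [Polynomial.natDegree_divX_eq_natDegree_tsub_one]; omega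
  have hd : (Q * R.divX).natDegree ≤ 2 * (m - r) - 1 := Polynomial.natDegree_mul_le.trans (by omega)
  have h := bw_sum m x hx (Q * R.divX) (by omega)
  have h' : ∑ i, (∏ j ∈ Finset.univ.erase i, (x i - x j)) * (u i * v i / x i)
      = (Q * R.divX).coeff m := by
    rw [← h]
    refine Finset.sum_congr rfl fun i _ => ?_
    rw [Polynomial.eval_mul, hQe]
    by_cases hi : i = 0
    · subst hi; simp [hu0]
    · have hxi : x i ≠ 0 := fun h0 => hi (hx (h0.trans hx0.symm))
      have h1 := hRX (x i)
      rw [hRe] at h1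
      have h2 : R.divX.eval (x i) = (∏ j ∈ Finset.univ.erase i, (x i - x j)) * v i / x i := by
        rw [eq_div_iff hxi, h1]
      rw [h2]
      field_simp [hc i]
  rw [h']
  split_ifs with he
  · have h3 : R.divX.coeff (m - r - 1) = ∑ i, x i ^ r * v i := by
      rw [Polynomial.coeff_divX, ← hRc]; congr 1; omega
    rw [← hQc, ← h3, ← Polynomial.coeff_mul_add_eq_of_natDegree_le hQd hDd]
    congr 1; omega
  · exact Polynomial.coeff_eq_zero_of_natDegree_lt (by omega)

lemma bw_deriv (a b : ℝ) (p : ℕ) :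
    (iteratedDeriv (2 * p) (fun t => Real.cos (a * t + b)) =
      fun t => (-1) ^ p * ((a ^ 2) ^ p * Real.cos (a * t + b))) ∧
    (iteratedDeriv (2 * p + 1) (fun t => Real.cos (a * t + b)) =
      fun t => (-1) ^ p * ((a ^ 2) ^ p * (-(a * Real.sin (a * t + b))))) := by
  have hlin : ∀ t, HasDerivAt (fun t => a * t + b) a t := fun t => by
    simpa using ((hasDerivAt_id t).const_mul a).add_const b
  have step : ∀ p : ℕ, iteratedDeriv (2 * p) (fun t => Real.cos (a * t + b)) =
      (fun t => (-1) ^ p * ((a ^ 2) ^ p * Real.cos (a * t + b))) →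
      iteratedDeriv (2 * p + 1) (fun t => Real.cos (a * t + b)) =
      fun t => (-1) ^ p * ((a ^ 2) ^ p * (-(a * Real.sin (a * t + b)))) := by
    intro p h
    rw [iteratedDeriv_succ, h]
    funext t
    have := (((hlin t).cos.const_mul ((a ^ 2) ^ p)).const_mul ((-1) ^ p)).deriv
    rw [this]; ring
  have h1 : iteratedDeriv (2 * p) (fun t => Real.cos (a * t + b)) =
      (fun t => (-1) ^ p * ((a ^ 2) ^ p * Real.cos (a * t + b))) := by
    induction p with
    | zero => funext t; simp
    | succ q ih =>
      rw [show 2 * (q + 1) = (2 * q + 1) + 1 by ring, iteratedDeriv_succ, step q ih]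
      funext t
      have := (((((hlin t).sin.const_mul a).neg).const_mul ((a ^ 2) ^ q)).const_mul
        ((-1) ^ q)).deriv
      refine this.trans ?_
      ring
  exact ⟨h1, step p h1⟩

lemma bw_psi (m : ℕ) (k : Fin (m + 1) → ℤ) (θ : Fin (m + 1) → ℝ) (t : ℝ)
    (hW : Wfn m k θ t ≠ 0) (j : Fin (m + 1)) :
    ∑ i : Fin (m + 1), ((-1) ^ ((i : ℕ) + m) * PsiF m k θ i t) * iteratedDeriv (j : ℕ) (chiF m k θ i) t =
      if (j : ℕ) = m then 1 else 0 := by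
  set M : Matrix (Fin (m + 1)) (Fin (m + 1)) ℝ :=
    Matrix.of fun i j => iteratedDeriv (j : ℕ) (chiF m k θ i) t with hM
  have hdet : M.det = Wfn m k θ t := rfl
  have hadj : ∀ i, M.adjugate (Fin.last m) i =
      ((-1) ^ ((i : ℕ) + m) * PsiF m k θ i t) * Wfn m k θ t := by
    intro i
    rw [Matrix.adjugate_fin_succ_eq_det_submatrix]
    have : (M.submatrix i.succAbove (Fin.last m).succAbove).det =
        wronsk (fun j : Fin m => chiF m k θ (i.succAbove j)) t := by
      unfold wronsk
      congr 1
      ext a b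
      simp [hM]
    rw [this]
    simp only [PsiF, Fin.val_last]
    field_simp
  have h := congrFun (congrFun (Matrix.adjugate_mul M) (Fin.last m)) j
  rw [Matrix.mul_apply, hdet] at h
  simp only [hadj, Matrix.smul_apply, Matrix.one_apply, smul_eq_mul] at h
  have h2 : (∑ i : Fin (m + 1), ((-1) ^ ((i : ℕ) + m) * PsiF m k θ i t) *
      iteratedDeriv (j : ℕ) (chiF m k θ i) t) * Wfn m k θ t =
      (if (j : ℕ) = m then 1 else 0) * Wfn m k θ t := by
    rw [Finset.sum_mul, mul_comm (ite _ _ _)]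
    have : (Fin.last m = j) ↔ ((j : ℕ) = m) := by
      rw [Fin.ext_iff, Fin.val_last, eq_comm]
    simp only [this] at h
    rw [← h]
    refine Finset.sum_congr rfl fun i _ => ?_
    simp only [hM, Matrix.of_apply]
    ring
  exact mul_right_cancel₀ hW h2

/-- Even and odd moments. -/
lemma bw_moments (m : ℕ) (k : Fin (m + 1) → ℤ) (θ : Fin (m + 1) → ℝ) (t : ℝ)
    (hW : Wfn m k θ t ≠ 0) :
    (∀ p, 2 * p ≤ m → ∑ i, ((k i : ℝ) ^ 2) ^ p * (((-1) ^ ((i : ℕ) + m) * PsiF m k θ i t) *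
      Real.cos ((k i : ℝ) * t + θ i)) = if 2 * p = m then (-1) ^ p else 0) ∧
    (∀ p, 2 * p + 1 ≤ m → ∑ i, ((k i : ℝ) ^ 2) ^ p * (((-1) ^ ((i : ℕ) + m) * PsiF m k θ i t) *
      (-((k i : ℝ) * Real.sin ((k i : ℝ) * t + θ i)))) =
        if 2 * p + 1 = m then (-1) ^ p else 0) := by
  have hsq : ∀ p : ℕ, ((-1 : ℝ) ^ p) * (-1) ^ p = 1 := fun p => by
    rw [← mul_pow]; norm_num
  constructor
  · intro p hp
    have h := bw_psi m k θ t hW ⟨2 * p, by omega⟩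
    have hd : ∀ i, iteratedDeriv (2 * p) (chiF m k θ i) t =
        (-1) ^ p * (((k i : ℝ) ^ 2) ^ p * Real.cos ((k i : ℝ) * t + θ i)) :=
      fun i => congrFun (bw_deriv (k i : ℝ) (θ i) p).1 t
    simp only [hd] at h
    calc _ = (-1 : ℝ) ^ p * _ := by
          rw [Finset.mul_sum]
          refine Finset.sum_congr rfl fun i _ => ?_
          rw [show ∀ A B C D : ℝ, A * (B * C) = D * ((B) * (D * (A * C))) ↔
            A * (B * C) = (D * D) * (A * (B * C)) by intros; ring_nf]
          rw [hsq, one_mul]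
      _ = (-1 : ℝ) ^ p * _ := by rw [h]
      _ = _ := by split_ifs <;> simp
  · intro p hp
    have h := bw_psi m k θ t hW ⟨2 * p + 1, by omega⟩
    have hd : ∀ i, iteratedDeriv (2 * p + 1) (chiF m k θ i) t =
        (-1) ^ p * (((k i : ℝ) ^ 2) ^ p * (-((k i : ℝ) * Real.sin ((k i : ℝ) * t + θ i)))) :=
      fun i => congrFun (bw_deriv (k i : ℝ) (θ i) p).2 t
    simp only [hd] at h
    calc _ = (-1 : ℝ) ^ p * _ := by
          rw [Finset.mul_sum]
          refine Finset.sum_congr rfl fun i _ => ?_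
          rw [show ∀ A B C D : ℝ, A * (B * C) = D * ((B) * (D * (A * C))) ↔
            A * (B * C) = (D * D) * (A * (B * C)) by intros; ring_nf]
          rw [hsq, one_mul]
      _ = (-1 : ℝ) ^ p * _ := by rw [h]
      _ = _ := by split_ifs <;> simp

/-- **Equation (E13) of Lemma 2 (bilinear Wronskian identity).**
`∑_{i=0}^m c_i Ψ_i(φ) Ψ_i(ϕ) cos(k_i (φ − ϕ)) = 1`. -/
theorem bilinear_wronskian_identity (m : ℕ) (hm : 1 ≤ m)
    (k : Fin (m + 1) → ℤ) (hk0 : k 0 = 0) (hk : StrictMono k)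
    (θ : Fin (m + 1) → ℝ) (hθ0 : θ 0 = 0)
    (φ ϕ : ℝ) (hWφ : Wfn m k θ φ ≠ 0) (hWϕ : Wfn m k θ ϕ ≠ 0) :
    ∑ i, cF m k i * PsiF m k θ i φ * PsiF m k θ i ϕ * Real.cos ((k i : ℝ) * (φ - ϕ))
      = 1 := by
  have hknn : ∀ i, 0 ≤ k i := fun i => hk0 ▸ hk.monotone (Fin.zero_le i)
  have hx : Function.Injective (fun i => (k i : ℝ) ^ 2) := by
    intro i j hij
    have h1 : (k i : ℝ) = k j :=
      (pow_left_inj₀ (by exact_mod_cast hknn i) (by exact_mod_cast hknn j) two_ne_zero).mp hij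
    exact hk.injective (by exact_mod_cast h1)
  obtain ⟨hA, hA'⟩ := bw_moments m k θ φ hWφ
  obtain ⟨hB, hB'⟩ := bw_moments m k θ ϕ hWϕ
  set x : Fin (m + 1) → ℝ := fun i => (k i : ℝ) ^ 2 with hxdef
  set u : Fin (m + 1) → ℝ := fun i => ((-1) ^ ((i : ℕ) + m) * PsiF m k θ i φ) *
      Real.cos ((k i : ℝ) * φ + θ i) with hu
  set v : Fin (m + 1) → ℝ := fun i => ((-1) ^ ((i : ℕ) + m) * PsiF m k θ i ϕ) *
      Real.cos ((k i : ℝ) * ϕ + θ i) with hv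
  set u' : Fin (m + 1) → ℝ := fun i => ((-1) ^ ((i : ℕ) + m) * PsiF m k θ i φ) *
      (-((k i : ℝ) * Real.sin ((k i : ℝ) * φ + θ i))) with hu'
  set v' : Fin (m + 1) → ℝ := fun i => ((-1) ^ ((i : ℕ) + m) * PsiF m k θ i ϕ) *
      (-((k i : ℝ) * Real.sin ((k i : ℝ) * ϕ + θ i))) with hv'
  change ∀ p, 2 * p ≤ m → ∑ i, x i ^ p * u i = _ at hA
  change ∀ p, 2 * p ≤ m → ∑ i, x i ^ p * v i = _ at hB
  change ∀ p, 2 * p + 1 ≤ m → ∑ i, x i ^ p * u' i = _ at hA'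
  change ∀ p, 2 * p + 1 ≤ m → ∑ i, x i ^ p * v' i = _ at hB'
  have hx0 : x 0 = 0 := by simp [hxdef, hk0]
  have hu0 : u' 0 = 0 := by simp [hu', hk0]
  have hv0 : v' 0 = 0 := by simp [hv', hk0]
  have hsq : ∀ p : ℕ, ((-1 : ℝ) ^ p) * (-1) ^ p = 1 := fun p => by
    rw [← mul_pow]; norm_num
  have hsplit : ∑ i, cF m k i * PsiF m k θ i φ * PsiF m k θ i ϕ *
      Real.cos ((k i : ℝ) * (φ - ϕ)) =
      ∑ i, (∏ j ∈ Finset.univ.erase i, (x i - x j)) * (u i * v i) +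
      ∑ i, (∏ j ∈ Finset.univ.erase i, (x i - x j)) * (u' i * v' i / x i) := by
    rw [← Finset.sum_add_distrib]
    refine Finset.sum_congr rfl fun i _ => ?_
    have hc : (∏ j ∈ Finset.univ.erase i, (x i - x j)) = cF m k i := rfl
    rw [hc]
    have huv : u i * v i = PsiF m k θ i φ * PsiF m k θ i ϕ *
        (Real.cos ((k i : ℝ) * φ + θ i) * Real.cos ((k i : ℝ) * ϕ + θ i)) := by
      simp only [hu, hv]
      linear_combination (PsiF m k θ i φ * PsiF m k θ i ϕ *
        (Real.cos ((k i : ℝ) * φ + θ i) * Real.cos ((k i : ℝ) * ϕ + θ i))) * hsq ((i : ℕ) + m)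
    have huv' : u' i * v' i / x i = PsiF m k θ i φ * PsiF m k θ i ϕ *
        (Real.sin ((k i : ℝ) * φ + θ i) * Real.sin ((k i : ℝ) * ϕ + θ i)) := by
      by_cases hi : i = 0
      · subst hi; simp [hu0, hk0, hθ0]
      · have hxi : x i ≠ 0 := fun h0 => hi (hx (h0.trans hx0.symm))
        rw [div_eq_iff hxi]
        simp only [hu', hv', hxdef]
        linear_combination (PsiF m k θ i φ * PsiF m k θ i ϕ * (k i : ℝ) ^ 2 *
          (Real.sin ((k i : ℝ) * φ + θ i) * Real.sin ((k i : ℝ) * ϕ + θ i))) * hsq ((i : ℕ) + m)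
    rw [huv, huv', show (k i : ℝ) * (φ - ϕ) = ((k i : ℝ) * φ + θ i) - ((k i : ℝ) * ϕ + θ i) by ring,
      Real.cos_sub]
    ring
  rw [hsplit]
  rcases Nat.even_or_odd' m with ⟨r, hr | hr⟩
  · rw [bw_pair m r (by omega) x u v hx
        (fun p hp => by rw [hA p (by omega), if_neg (by omega)])
        (fun p hp => by rw [hB p (by omega), if_neg (by omega)]) (by omega),
      bw_pair' m r (by omega) x u' v' hx hx0 hu0 hv0 (by omega)
        (fun p hp => by rw [hA' p (by omega), if_neg (by omega)])
        (fun p hp => by rw [hB' p (by omega), if_neg (by omega)]) (by omega),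
      if_pos (by omega), if_neg (by omega), hA r (by omega), hB r (by omega),
      if_pos (by omega), hsq, add_zero]
  · rw [bw_pair m (r + 1) (by omega) x u v hx
        (fun p hp => by rw [hA p (by omega), if_neg (by omega)])
        (fun p hp => by rw [hB p (by omega), if_neg (by omega)]) (by omega),
      bw_pair' m r (by omega) x u' v' hx hx0 hu0 hv0 (by omega)
        (fun p hp => by rw [hA' p (by omega), if_neg (by omega)])
        (fun p hp => by rw [hB' p (by omega), if_neg (by omega)]) (by omega),
      if_neg (by omega), if_pos (by omega), hA' r (by omega), hB' r (by omega),
      if_pos (by omega), hsq, zero_add]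
end
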